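/- arXiv:1902.03822 — 6 statements merged into one kernel-verified Lean document; each statement's English description precedes it below -/
import Mathlib

section
/- There is a one-relator group with undecidable rational subset membership problem: there exists a regular expression ρ over the alphabet Fin 2 × Bool such that the predicate on words l : List (Fin 2 × Bool) given by 'π(l) belongs to the image π(L(ρ)) ⊆ G of the regular language L(ρ) matched by ρ' is not ComputablePred, where G = Gp⟨a, t | a(tat⁻¹) = (tat⁻¹)a⟩. -/
/-!
Take elements `a`, `b`, `c`, `d` of a group such that neighbours commute. Then
`a * c ^ m * b ^ m * d = b ^ m * (a * d) * c ^ m`. Hence, if the steps `(n₀, n₁), …, (nₖ₋₁, nₖ)`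
form a path, the product of all `c ^ nᵢ * b ^ nᵢ₊₁ * (a * d)`, times `c ^ nₖ`, equals `c ^ n₀` times
the product of all `a * c ^ nᵢ * b ^ nᵢ * d` with `i > 0`. If there are no further relations, then
this equation conversely forces a list of steps to be a path: killing `b`, `d`, or else `a`, `c`,
turns it into an equation between positive words in a free group. Both sides of the equation vary
over rational sets, even if the steps are restricted to multiplication by a number, division by a
number, or the test for indivisibility, combined by composition and iteration. Acting on Gödel
numbers, which hold counters as exponents of primes, these are the instructions of a Minsky machine,
so for some rational set `T` the halting problem amounts to the question whether `c ^ n ∈ T`.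

In `G` one takes the conjugates `t ^ i * a * t ^ (-i)` with `i < 4`. The two free quotients are
coordinates of the base group of a wreath product of a free group by `ℤ` to which `G` maps.
-/

/-- The relator `a t a t⁻¹ a⁻¹ t a⁻¹ t⁻¹` (i.e. `a(tat⁻¹)=(tat⁻¹)a`), with `a = of 0`, `t = of 1`. -/
def oneRel : FreeGroup (Fin 2) :=
  FreeGroup.of 0 * FreeGroup.of 1 * FreeGroup.of 0 * (FreeGroup.of 1)⁻¹ *
    (FreeGroup.of 0)⁻¹ * FreeGroup.of 1 * (FreeGroup.of 0)⁻¹ * (FreeGroup.of 1)⁻¹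

/-- The one-relator group `G = Gp⟨a,t | a(tat⁻¹)=(tat⁻¹)a⟩`. -/
abbrev G : Type := PresentedGroup {oneRel}

/-- Evaluation of words: the letter `(i, true)` goes to the image of `FreeGroup.of i` in `G`
and `(i, false)` to its inverse. -/
def π (l : List (Fin 2 × Bool)) : G := PresentedGroup.mk {oneRel} (FreeGroup.mk l)

namespace RationalSubset

section IsRational

open Pointwise

/-- Rational subsets of a monoid: the least family of subsets which contains the finite ones and is
closed under union, product and generation of submonoids. -/
inductive IsRational {M : Type*} [Monoid M] : Set M → Prop
  | empty : IsRational ∅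
  | singleton (x : M) : IsRational {x}
  | union {S T : Set M} : IsRational S → IsRational T → IsRational (S ∪ T)
  | mul {S T : Set M} : IsRational S → IsRational T → IsRational (S * T)
  | closure {S : Set M} : IsRational S → IsRational (Submonoid.closure S : Set M)

theorem IsRational.of_finite {M : Type*} [Monoid M] {S : Set M} (hS : S.Finite) :
    IsRational S := by
  induction S, hS using Set.Finite.induction_on with
  | empty => exact .empty
  | insert _ _ ih => exact (IsRational.singleton _).union ih

theorem IsRational.powers {M : Type*} [Monoid M] (x : M) :
    IsRational (Submonoid.powers x : Set M) := by
  rw [Submonoid.powers_eq_closure]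
  exact (IsRational.singleton x).closure

theorem IsRational.inv {H : Type*} [Group H] {S : Set H} (hS : IsRational S) :
    IsRational S⁻¹ := by
  induction hS with
  | empty => simpa using IsRational.empty
  | singleton x => simpa using IsRational.singleton x⁻¹
  | union _ _ ihS ihT => simpa using ihS.union ihT
  | mul _ _ ihS ihT => simpa using ihT.mul ihS
  | closure _ ih =>
    rw [← Submonoid.coe_inv, ← Submonoid.closure_inv]
    exact ih.closure

variable {α M : Type*} [Monoid M]

theorem image_kstar (f : FreeMonoid α →* M) (L : Language α) :
    (fun w => f (.ofList w)) '' (KStar.kstar L : Language α) =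
      Submonoid.closure ((fun w => f (.ofList w)) '' L) := by
  apply Set.Subset.antisymm
  · rintro _ ⟨w, hw, rfl⟩
    obtain ⟨ws, rfl, hws⟩ := Language.mem_kstar.1 hw
    beta_reduce
    rw [FreeMonoid.ofList_flatten, map_list_prod, List.map_map]
    refine Submonoid.list_prod_mem _ fun x hx => ?_
    obtain ⟨w, hw, rfl⟩ := List.mem_map.1 hx
    exact Submonoid.subset_closure ⟨w, hws w hw, rfl⟩
  · intro x hx
    induction hx using Submonoid.closure_induction with
    | mem x hx => exact Set.image_mono (le_kstar (a := L)) hx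
    | one => exact ⟨[], Language.nil_mem_kstar L, map_one f⟩
    | mul _ _ _ _ ihx ihy =>
      obtain ⟨⟨v, hv, rfl⟩, ⟨w, hw, rfl⟩⟩ := And.intro ihx ihy
      refine ⟨v ++ w, ?_, map_mul f (.ofList v) (.ofList w)⟩
      rw [← kstar_mul_kstar]
      exact Language.append_mem_mul hv hw

theorem IsRational.exists_regularExpression {f : FreeMonoid α →* M}
    (hf : Function.Surjective f) {S : Set M} (hS : IsRational S) :
    ∃ ρ : RegularExpression α, (fun w => f (.ofList w)) '' (ρ.matches' : Set (List α)) = S := by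
  have image_comp (ρ ρ' : RegularExpression α) :
      (fun w => f (.ofList w)) '' (ρ.comp ρ').matches' =
        (fun w => f (.ofList w)) '' ρ.matches' * (fun w => f (.ofList w)) '' ρ'.matches' :=
    Set.image_image2_distrib fun v w => map_mul f (.ofList v) (.ofList w)
  induction hS with
  | empty => exact ⟨.zero, Set.image_empty _⟩
  | singleton x =>
    obtain ⟨w, rfl⟩ := hf x
    induction w using FreeMonoid.inductionOn with
    | one => exact ⟨.epsilon, Set.image_singleton⟩
    | of i => exact ⟨.char i, Set.image_singleton⟩
    | mul v w ihv ihw =>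
      obtain ⟨⟨ρ, hρ⟩, ⟨ρ', hρ'⟩⟩ := And.intro ihv ihw
      exact ⟨.comp ρ ρ', by rw [image_comp, hρ, hρ', Set.singleton_mul_singleton, map_mul]⟩
  | union _ _ ihS ihT =>
    obtain ⟨⟨ρ, rfl⟩, ⟨ρ', rfl⟩⟩ := And.intro ihS ihT
    exact ⟨.plus ρ ρ', Set.image_union _ _ _⟩
  | mul _ _ ihS ihT =>
    obtain ⟨⟨ρ, rfl⟩, ⟨ρ', rfl⟩⟩ := And.intro ihS ihT
    exact ⟨.comp ρ ρ', image_comp ρ ρ'⟩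
  | closure _ ih =>
    obtain ⟨ρ, rfl⟩ := ih
    exact ⟨.star ρ, image_kstar f _⟩

end IsRational

section Realizable

open Pointwise

variable {M : Type*} [Monoid M]

/-- `IsPath n w m` says that the pairs listed by `w` are consecutive steps leading from `n` to
`m`. -/
def IsPath : ℕ → FreeMonoid (ℕ × ℕ) → ℕ → Prop
  | n, [], m => n = m
  | n, q :: w, m => n = q.1 ∧ IsPath q.2 w m

theorem isPath_one {n m : ℕ} : IsPath n 1 m ↔ n = m := Iff.rfl

theorem isPath_of_mul {n m : ℕ} {q : ℕ × ℕ} {w : FreeMonoid (ℕ × ℕ)} :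
    IsPath n (.of q * w) m ↔ n = q.1 ∧ IsPath q.2 w m := Iff.rfl

theorem isPath_of {n m : ℕ} {q : ℕ × ℕ} : IsPath n (.of q) m ↔ (n, m) = q := by
  rw [← mul_one (FreeMonoid.of q), isPath_of_mul, isPath_one, Prod.ext_iff, eq_comm (a := m)]

theorem isPath_mul {n m : ℕ} {v w : FreeMonoid (ℕ × ℕ)} :
    IsPath n (v * w) m ↔ ∃ k, IsPath n v k ∧ IsPath k w m := by
  induction v using FreeMonoid.inductionOn' generalizing n with
  | one => simp [isPath_one]
  | of_mul q v ih => simp [mul_assoc, isPath_of_mul, ih, and_assoc]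

/-- The product of the elements `c ^ n * b ^ m * (a * d)` along a list of steps `(n, m)`. -/
def stepHom (a b c d : M) : FreeMonoid (ℕ × ℕ) →* M :=
  FreeMonoid.lift fun q => c ^ q.1 * b ^ q.2 * (a * d)

/-- The product of the elements `a * c ^ m * b ^ m * d` along a list of numbers `m`. -/
def stateHom (a b c d : M) : FreeMonoid ℕ →* M :=
  FreeMonoid.lift fun m => a * c ^ m * b ^ m * d

theorem map_stepHom {N : Type*} [Monoid N] (φ : M →* N) (a b c d : M) (w : FreeMonoid (ℕ × ℕ)) :
    φ (stepHom a b c d w) = stepHom (φ a) (φ b) (φ c) (φ d) w := by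
  rw [stepHom, stepHom, FreeMonoid.hom_map_lift]
  simp [Function.comp_def]

theorem map_stateHom {N : Type*} [Monoid N] (φ : M →* N) (a b c d : M) (v : FreeMonoid ℕ) :
    φ (stateHom a b c d v) = stateHom (φ a) (φ b) (φ c) (φ d) v := by
  rw [stateHom, stateHom, FreeMonoid.hom_map_lift]
  simp [Function.comp_def]

theorem stepHom_of (a b c d : M) (q : ℕ × ℕ) :
    stepHom a b c d (.of q) = c ^ q.1 * b ^ q.2 * (a * d) :=
  FreeMonoid.lift_eval_of _ q

theorem stateHom_of (a b c d : M) (m : ℕ) :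
    stateHom a b c d (.of m) = a * c ^ m * b ^ m * d :=
  FreeMonoid.lift_eval_of _ m

/-- The equation which certifies that the steps in `w` form a path from `n` to `m` visiting the
numbers in `v`. -/
def PathEquation (a b c d : M) (n : ℕ) (w : FreeMonoid (ℕ × ℕ)) (v : FreeMonoid ℕ) (m : ℕ) :
    Prop :=
  c ^ n * stateHom a b c d v = stepHom a b c d w * c ^ m

theorem pathEquation_map_iff {N : Type*} [Monoid N] {φ : M →* N} (hφ : Function.Injective φ)
    {a b c d : M} {n m : ℕ} {w : FreeMonoid (ℕ × ℕ)} {v : FreeMonoid ℕ} :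
    PathEquation (φ a) (φ b) (φ c) (φ d) n w v m ↔ PathEquation a b c d n w v m := by
  rw [PathEquation, PathEquation, ← hφ.eq_iff]
  simp [map_stepHom, map_stateHom]

theorem PathEquation.map {N : Type*} [Monoid N] (φ : M →* N) {a b c d : M} {n m : ℕ}
    {w : FreeMonoid (ℕ × ℕ)} {v : FreeMonoid ℕ} (h : PathEquation a b c d n w v m) :
    PathEquation (φ a) (φ b) (φ c) (φ d) n w v m := by
  simpa [PathEquation, map_stepHom, map_stateHom] using congrArg φ h

theorem IsPath.pathEquation {a b c d : M} (hab : Commute a b) (hbc : Commute b c)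
    (hcd : Commute c d) {w : FreeMonoid (ℕ × ℕ)} {n m : ℕ} (hw : IsPath n w m) :
    PathEquation a b c d n w (w.map Prod.snd) m := by
  rw [PathEquation]
  induction w using FreeMonoid.inductionOn' generalizing n with
  | one => simp [isPath_one.1 hw]
  | of_mul q w ih =>
    obtain ⟨rfl, hp⟩ := isPath_of_mul.1 hw
    have state_eq : a * c ^ q.2 * b ^ q.2 * d = b ^ q.2 * (a * d) * c ^ q.2 := by
      rw [mul_assoc a, ← (hbc.pow_pow _ _).eq, ← mul_assoc, (hab.pow_right _).eq, mul_assoc,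
        (hcd.pow_left _).eq]
      simp only [mul_assoc]
    calc c ^ q.1 * stateHom a b c d ((FreeMonoid.of q * w).map Prod.snd)
      _ = c ^ q.1 * (b ^ q.2 * (a * d)) * (c ^ q.2 * stateHom a b c d (w.map Prod.snd)) := by
        rw [map_mul, map_mul, FreeMonoid.map_of, stateHom_of, state_eq]
        simp only [mul_assoc]
      _ = stepHom a b c d (.of q * w) * c ^ m := by
        rw [ih hp, map_mul, stepHom_of]
        simp only [mul_assoc]

/-- The binary relation `R` on `ℕ` is realizable in `M` if `R n m` is witnessed by a path from
`n` to `m` in a set of lists of steps whose products form a rational set. -/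
def Realizable (a b c d : M) (R : ℕ → ℕ → Prop) : Prop :=
  ∃ L : Set (FreeMonoid (ℕ × ℕ)), IsRational (stepHom a b c d '' L) ∧
    ∀ n m, R n m ↔ ∃ w ∈ L, IsPath n w m

variable {a b c d : M} {R S : ℕ → ℕ → Prop}

theorem Realizable.comp (hR : Realizable a b c d R) (hS : Realizable a b c d S) :
    Realizable a b c d (Relation.Comp R S) := by
  obtain ⟨K, hK, hRK⟩ := hR
  obtain ⟨L, hL, hSL⟩ := hS
  refine ⟨K * L, by simpa only [Set.image_mul] using hK.mul hL, fun n m => ?_⟩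
  constructor
  · rintro ⟨k, hnk, hkm⟩
    obtain ⟨v, hv, hvp⟩ := (hRK n k).1 hnk
    obtain ⟨w, hw, hwp⟩ := (hSL k m).1 hkm
    exact ⟨v * w, Set.mul_mem_mul hv hw, isPath_mul.2 ⟨k, hvp, hwp⟩⟩
  · rintro ⟨_, ⟨v, hv, w, hw, rfl⟩, hp⟩
    obtain ⟨k, hvp, hwp⟩ := isPath_mul.1 hp
    exact ⟨k, (hRK n k).2 ⟨v, hv, hvp⟩, (hSL k m).2 ⟨w, hw, hwp⟩⟩

theorem Realizable.reflTransGen (hR : Realizable a b c d R) :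
    Realizable a b c d (Relation.ReflTransGen R) := by
  obtain ⟨L, hL, hRL⟩ := hR
  refine ⟨Submonoid.closure L, ?_, fun n m => ⟨fun h => ?_, ?_⟩⟩
  · rw [← Submonoid.coe_map, MonoidHom.map_mclosure]
    exact hL.closure
  · induction h with
    | refl => exact ⟨1, one_mem _, isPath_one.2 rfl⟩
    | tail _ hkm ih =>
      obtain ⟨v, hv, hvp⟩ := ih
      obtain ⟨w, hw, hwp⟩ := (hRL _ _).1 hkm
      exact ⟨v * w, mul_mem hv (Submonoid.subset_closure hw), isPath_mul.2 ⟨_, hvp, hwp⟩⟩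
  · rintro ⟨w, hw, hp⟩
    induction hw using Submonoid.closure_induction generalizing n m with
    | mem w hw => exact .single ((hRL n m).2 ⟨w, hw, hp⟩)
    | one => rw [isPath_one.1 hp]
    | mul v w _ _ ihv ihw =>
      obtain ⟨k, hvp, hwp⟩ := isPath_mul.1 hp
      exact (ihv n k hvp).trans (ihw k m hwp)

theorem Realizable.of_isRational
    (hR : IsRational ((fun q : ℕ × ℕ => c ^ q.1 * b ^ q.2) '' {q | R q.1 q.2})) :
    Realizable a b c d R := by
  refine ⟨FreeMonoid.of '' {q | R q.1 q.2}, ?_, fun n m => ?_⟩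
  · convert hR.mul (.singleton (a * d)) using 1
    rw [Set.mul_singleton, Set.image_image, Set.image_image]
    rfl
  · simp [isPath_of]

theorem realizable_linear (hbc : Commute b c) (u v : ℕ) :
    Realizable a b c d fun n m => ∃ j, n = u * j ∧ m = v * j := by
  apply Realizable.of_isRational
  convert IsRational.powers (c ^ u * b ^ v) using 1
  ext x
  simp [Submonoid.mem_powers_iff, (hbc.symm.pow_pow u v).mul_pow, ← pow_mul]

theorem realizable_not_dvd (hbc : Commute b c) {p : ℕ} (hp : p ≠ 0) :
    Realizable a b c d fun n m => ¬ p ∣ n ∧ m = n := by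
  apply Realizable.of_isRational
  have hfin : (((c * b) ^ ·) '' Set.Ioo 0 p).Finite := (Set.finite_Ioo 0 p).image _
  convert (IsRational.of_finite hfin).mul (.powers ((c * b) ^ p)) using 1
  have diag (k : ℕ) : c ^ k * b ^ k = (c * b) ^ k := (hbc.symm.mul_pow k).symm
  apply Set.Subset.antisymm
  · rintro _ ⟨⟨n, m⟩, ⟨hn, h⟩, rfl⟩
    obtain rfl : m = n := h
    refine ⟨_, ⟨m % p, ⟨Nat.pos_of_ne_zero fun h => hn (Nat.dvd_of_mod_eq_zero h),
      Nat.mod_lt m (Nat.pos_of_ne_zero hp)⟩, rfl⟩, _, ⟨m / p, rfl⟩, ?_⟩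
    simp only [diag, ← pow_mul, ← pow_add, Nat.mod_add_div]
  · rintro _ ⟨_, ⟨r, ⟨hr, hrp⟩, rfl⟩, _, ⟨j, rfl⟩, rfl⟩
    refine ⟨(r + p * j, r + p * j), ⟨fun h => ?_, rfl⟩, ?_⟩
    · exact Nat.not_dvd_of_pos_of_lt hr hrp ((Nat.dvd_add_left (dvd_mul_right p j)).1 h)
    · simp only [diag, ← pow_mul, ← pow_add]

theorem isRational_range_stateHom (hbc : Commute b c) :
    IsRational (Set.range (stateHom a b c d)) := by
  have hstates : IsRational (Set.range fun m => a * c ^ m * b ^ m * d) := by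
    convert ((IsRational.singleton a).mul (.powers (c * b))).mul (.singleton d) using 1
    ext x
    simp [Submonoid.mem_powers_iff, hbc.symm.mul_pow, mul_assoc]
  rw [← MonoidHom.coe_mrange, stateHom, FreeMonoid.mrange_lift]
  exact hstates.closure

/-- The quadruple `a, b, c, d` is decodable if the path equation determines that the steps form a
path. The commutation relations provide the converse, see `IsPath.pathEquation`. -/
structure IsDecodable (a b c d : M) : Prop where
  commute_ab : Commute a b
  commute_bc : Commute b c
  commute_cd : Commute c d
  exists_isPath {n m : ℕ} {w : FreeMonoid (ℕ × ℕ)} {v : FreeMonoid ℕ} :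
    PathEquation a b c d n w v m → ∃ k, IsPath n w k

theorem IsDecodable.exists_isRational {H : Type*} [Group H] {a b c d : H}
    (h : IsDecodable a b c d) (hR : Realizable a b c d R) :
    ∃ T : Set H, IsRational T ∧ ∀ n, c ^ n ∈ T ↔ ∃ m, R n m := by
  obtain ⟨L, hL, hRL⟩ := hR
  refine ⟨stepHom a b c d '' L * Submonoid.powers c * (Set.range (stateHom a b c d))⁻¹,
    (hL.mul (.powers c)).mul (isRational_range_stateHom h.commute_bc).inv, fun n => ?_⟩
  have mem_iff (T : Set H) : c ^ n ∈ T * (Set.range (stateHom a b c d))⁻¹ ↔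
      ∃ v, c ^ n * stateHom a b c d v ∈ T := by
    constructor
    · rintro ⟨x, hx, _, ⟨v, hv⟩, hxv⟩
      exact ⟨v, by simpa [hv, ← hxv] using hx⟩
    · rintro ⟨v, hv⟩
      exact ⟨_, hv, _, ⟨v, (inv_inv _).symm⟩, mul_inv_cancel_right _ _⟩
  rw [mem_iff]
  constructor
  · rintro ⟨v, _, ⟨w, hw, rfl⟩, _, ⟨k, rfl⟩, heq⟩
    obtain ⟨m, hp⟩ := h.exists_isPath heq.symm
    exact ⟨m, (hRL n m).2 ⟨w, hw, hp⟩⟩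
  · rintro ⟨m, hnm⟩
    obtain ⟨w, hw, hp⟩ := (hRL n m).1 hnm
    exact ⟨w.map Prod.snd, _, ⟨w, hw, rfl⟩, _, ⟨m, rfl⟩,
      (hp.pathEquation h.commute_ab h.commute_bc h.commute_cd).symm⟩

end Realizable

section FreeMonoid

theorem injective_lift_freeGroup_of {α : Type*} :
    Function.Injective (FreeMonoid.lift (FreeGroup.of : α → FreeGroup α)) := by
  classical
  have lift_eq (w : FreeMonoid α) :
      FreeMonoid.lift FreeGroup.of w = FreeGroup.mk (w.toList.map fun x => (x, true)) := by
    induction w using FreeMonoid.inductionOn' with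
    | one => rfl
    | of_mul x w ih =>
      rw [map_mul, ih]
      rfl
  have toWord_eq (w : FreeMonoid α) :
      (FreeMonoid.lift FreeGroup.of w).toWord = w.toList.map fun x => (x, true) := by
    have reduced : FreeGroup.IsReduced (w.toList.map fun x => (x, true)) := by
      rw [FreeGroup.IsReduced, List.isChain_map]
      exact (List.pairwise_of_forall fun _ _ _ => rfl).isChain
    rw [lift_eq, FreeGroup.toWord_mk, reduced.reduce_eq]
  intro v w h
  have := toWord_eq v ▸ toWord_eq w ▸ congrArg FreeGroup.toWord h
  exact FreeMonoid.toList.injective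
    (List.map_injective_iff.2 (fun x y hxy => congrArg Prod.fst hxy) this)

theorem pow_of_mul_of_mul_inj {α : Type*} {x y : α} (hxy : x ≠ y) {n m : ℕ} {v w : FreeMonoid α}
    (h : FreeMonoid.of x ^ n * (.of y * v) = .of x ^ m * (.of y * w)) : n = m ∧ v = w := by
  induction n generalizing m with
  | zero =>
    cases m with
    | zero => simpa using h
    | succ m =>
      have := congrArg FreeMonoid.toList h
      simp [pow_succ', mul_assoc, hxy.symm] at this
  | succ n ih =>
    cases m with
    | zero =>
      have := congrArg FreeMonoid.toList h
      simp [pow_succ', mul_assoc, hxy] at this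
    | succ m =>
      rw [pow_succ', pow_succ', mul_assoc, mul_assoc] at h
      obtain ⟨rfl, hvw⟩ := ih (mul_left_cancel h)
      exact ⟨rfl, hvw⟩

theorem exists_isPath_of_pathEquation {α : Type*} {n m : ℕ}
    {w : FreeMonoid (ℕ × ℕ)} {v : FreeMonoid ℕ} {x y : α} (hxy : x ≠ y)
    (h₁ : PathEquation (FreeMonoid.of y) 1 (.of x) 1 n w v m)
    (h₂ : PathEquation 1 (FreeMonoid.of y) 1 (.of x) n w v m) : ∃ k, IsPath n w k := by
  rw [PathEquation] at h₁ h₂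
  rw [one_pow, one_pow, one_mul, mul_one] at h₂
  induction w using FreeMonoid.inductionOn' generalizing n v with
  | one => exact ⟨n, isPath_one.2 rfl⟩
  | of_mul q w ih =>
    induction v using FreeMonoid.casesOn with
    | one =>
      have := congrArg FreeMonoid.toList h₂
      simp [stepHom_of] at this
    | of_mul j v =>
      simp only [map_mul, stepHom_of, stateHom_of, one_pow, mul_one, one_mul, mul_assoc] at h₁ h₂
      obtain ⟨rfl, h₁'⟩ := pow_of_mul_of_mul_inj hxy h₁
      obtain ⟨rfl, h₂'⟩ := pow_of_mul_of_mul_inj hxy.symm h₂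
      obtain ⟨k, hk⟩ := ih h₁' h₂'
      exact ⟨k, isPath_of_mul.2 ⟨rfl, hk⟩⟩

end FreeMonoid

section OneRelator

open RegularWreathProduct commutatorElement

/-- The inclusion of the base group of a regular wreath product. -/
def baseHom (D Q : Type*) [Group D] [Group Q] : (Q → D) →* D ≀ᵣ Q where
  toFun f := ⟨f, 1⟩
  map_one' := rfl
  map_mul' f g := by ext <;> simp

theorem injective_baseHom (D Q : Type*) [Group D] [Group Q] :
    Function.Injective (baseHom D Q) :=
  fun _ _ h => congrArg RegularWreathProduct.left h

theorem oneRel_eq_commutatorElement :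
    oneRel = ⁅(FreeGroup.of 0 : FreeGroup (Fin 2)),
      FreeGroup.of 1 * FreeGroup.of 0 * (FreeGroup.of 1)⁻¹⁆ := by
  simp [oneRel, commutatorElement_def, mul_assoc]

/-- The conjugate `t ^ i * a * t ^ (-i)` in the one-relator group. -/
def conjGen (i : ℕ) : G :=
  PresentedGroup.of 1 ^ i * PresentedGroup.of 0 * (PresentedGroup.of 1 ^ i)⁻¹

theorem commute_conjGen_succ (i : ℕ) : Commute (conjGen i) (conjGen (i + 1)) := by
  have commute_zero : Commute (conjGen 0) (conjGen 1) := by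
    have rel := (congrArg (PresentedGroup.mk {oneRel}) oneRel_eq_commutatorElement).symm.trans
      (PresentedGroup.one_of_mem rfl)
    rw [map_commutatorElement, commutatorElement_eq_one_iff_commute] at rel
    simp only [conjGen, pow_zero, pow_one, one_mul, inv_one, mul_one]
    exact rel
  have conj_zero (j : ℕ) : conjGen (i + j) =
      PresentedGroup.of 1 ^ i * conjGen j * (PresentedGroup.of 1 ^ i)⁻¹ := by
    simp [conjGen, pow_add, mul_assoc]
  rw [conj_zero 1, ← add_zero i, conj_zero 0, add_zero]
  exact (Commute.conj_iff _).2 commute_zero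

theorem exists_hom_conjGen {D : Type*} [Group D] (f : ℤ → D)
    (hf : ∀ s, Commute (f s) (f (s - 1))) :
    ∃ φ : G →* D ≀ᵣ Multiplicative ℤ,
      ∀ i : ℕ, φ (conjGen i) = baseHom D (Multiplicative ℤ) fun s => f (s.toAdd - i) := by
  let a := baseHom D (Multiplicative ℤ) fun s => f s.toAdd
  let t : D ≀ᵣ Multiplicative ℤ := inl (.ofAdd 1)
  have conj_eq (i : ℕ) :
      t ^ i * a * (t ^ i)⁻¹ = baseHom D (Multiplicative ℤ) fun s => f (s.toAdd - i) := by
    rw [← map_pow, ← map_inv]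
    ext s <;> simp [a, baseHom, inl, neg_add_eq_sub]
  have rel : ∀ r ∈ ({oneRel} : Set (FreeGroup (Fin 2))), FreeGroup.lift ![a, t] r = 1 := by
    rintro _ rfl
    have conj_one : t * a * t⁻¹ = baseHom D (Multiplicative ℤ) fun s => f (s.toAdd - 1) := by
      simpa using conj_eq 1
    have : Commute a (t * a * t⁻¹) := conj_one ▸
      (Pi.commute_iff.2 fun s : Multiplicative ℤ => hf s.toAdd).map (baseHom D (Multiplicative ℤ))
    simpa [oneRel_eq_commutatorElement, map_commutatorElement,
      commutatorElement_eq_one_iff_commute] using this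
  refine ⟨PresentedGroup.toGroup rel, fun i => ?_⟩
  simpa [conjGen] using conj_eq i

/-- The coordinate function of the image of `a` in the wreath product. The conjugates
`t ^ i * a * t ^ (-i)` with `i < 4` then have as coordinates at `2` and `3` the quadruples
`y, 1, x, 1` and `1, y, 1, x`. -/
def coordinate {α : Type*} (x y : α) (s : ℤ) : FreeGroup α :=
  if s = 0 then .of x else if s = 2 then .of y else 1

theorem isDecodable_conjGen : IsDecodable (conjGen 0) (conjGen 1) (conjGen 2) (conjGen 3) where
  commute_ab := commute_conjGen_succ 0
  commute_bc := commute_conjGen_succ 1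
  commute_cd := commute_conjGen_succ 2
  exists_isPath {n m w v} h := by
    obtain ⟨φ, hφ⟩ := exists_hom_conjGen (coordinate true false) fun s => by
      unfold coordinate
      split_ifs <;> first | omega | simp
    have hbase := h.map φ
    simp only [hφ, pathEquation_map_iff (injective_baseHom (FreeGroup Bool) _)] at hbase
    have h₁ : PathEquation (FreeGroup.of false) 1 (.of true) 1 n w v m := by
      simpa [coordinate] using hbase.map (Pi.evalMonoidHom _ (Multiplicative.ofAdd 2))
    have h₂ : PathEquation 1 (FreeGroup.of false) 1 (.of true) n w v m := by
      simpa [coordinate] using hbase.map (Pi.evalMonoidHom _ (Multiplicative.ofAdd 3))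
    exact exists_isPath_of_pathEquation (x := true) (y := false) (v := v) (m := m) (by decide)
      ((pathEquation_map_iff injective_lift_freeGroup_of).1 (by simpa using h₁))
      ((pathEquation_map_iff injective_lift_freeGroup_of).1 (by simpa using h₂))

end OneRelator

section CounterRel

open Matrix (vecCons vecTail)
open Relation

/-- The input-output relations of nondeterministic counter programs on `m` counters. The programs
are built from increments, decrements (undefined at `0`) and zero tests by composition, iteration
and the use of an auxiliary counter, put in front, which starts and ends with value `0`. -/
inductive CounterRel : ∀ {m : ℕ}, ((Fin m → ℕ) → (Fin m → ℕ) → Prop) → Prop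
  | inc {m : ℕ} (i : Fin m) : CounterRel fun σ τ => τ = σ + Pi.single i 1
  | dec {m : ℕ} (i : Fin m) : CounterRel fun σ τ => σ = τ + Pi.single i 1
  | isZero {m : ℕ} (i : Fin m) : CounterRel fun σ τ => σ i = 0 ∧ τ = σ
  | comp {m : ℕ} {R S : (Fin m → ℕ) → (Fin m → ℕ) → Prop} :
      CounterRel R → CounterRel S → CounterRel (Comp R S)
  | star {m : ℕ} {R : (Fin m → ℕ) → (Fin m → ℕ) → Prop} :
      CounterRel R → CounterRel (ReflTransGen R)
  | newCounter {m : ℕ} {R : (Fin (m + 1) → ℕ) → (Fin (m + 1) → ℕ) → Prop} :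
      CounterRel R → CounterRel fun σ τ => R (vecCons 0 σ) (vecCons 0 τ)

variable {m : ℕ} {R S : (Fin m → ℕ) → (Fin m → ℕ) → Prop}

theorem CounterRel.of_iff (hR : CounterRel R) (h : ∀ σ τ, R σ τ ↔ S σ τ) : CounterRel S := by
  rwa [← show R = S from funext₂ fun σ τ => propext (h σ τ)]

theorem CounterRel.flip (hR : CounterRel R) : CounterRel (flip R) := by
  induction hR with
  | inc i => exact .dec i
  | dec i => exact .inc i
  | isZero i =>
    refine (CounterRel.isZero i).of_iff fun σ τ => ?_
    constructor <;> rintro ⟨h, rfl⟩ <;> exact ⟨h, rfl⟩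
  | comp _ _ ihR ihS =>
    refine (ihS.comp ihR).of_iff fun σ τ => exists_congr fun _ => and_comm
  | star _ ih => exact ih.star.of_iff fun σ τ => reflTransGen_swap
  | newCounter _ ih => exact ih.newCounter

theorem reflTransGen_map_iff {X Y : Type*} {R : Y → Y → Prop} {S : X → X → Prop} {f : X → Y}
    (h : ∀ x y, R (f x) y ↔ ∃ x', S x x' ∧ y = f x') (x : X) (y : Y) :
    ReflTransGen R (f x) y ↔ ∃ x', ReflTransGen S x x' ∧ y = f x' := by
  constructor
  · intro hxy
    induction hxy with
    | refl => exact ⟨x, .refl, rfl⟩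
    | tail _ hyz ih =>
      obtain ⟨x', hx', rfl⟩ := ih
      obtain ⟨x'', hx'', rfl⟩ := (h _ _).1 hyz
      exact ⟨x'', hx'.tail hx'', rfl⟩
  · rintro ⟨x', hx', rfl⟩
    exact hx'.lift f fun _ _ hab => (h _ _).2 ⟨_, hab, rfl⟩

theorem reflTransGen_eq_add_iff {A : Type*} [AddMonoid A] (u : A) {x y : A} :
    ReflTransGen (fun x y => y = x + u) x y ↔ ∃ k : ℕ, y = x + k • u := by
  constructor
  · intro h
    induction h with
    | refl => exact ⟨0, by simp⟩
    | tail _ h ih =>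
      obtain ⟨k, rfl⟩ := ih
      exact ⟨k + 1, by rw [h, succ_nsmul, add_assoc]⟩
  · rintro ⟨k, rfl⟩
    induction k with
    | zero => simpa using ReflTransGen.refl
    | succ k ih => exact ih.tail (by rw [succ_nsmul, add_assoc])

theorem counterRel_add (i : Fin m) : CounterRel fun σ τ => ∃ k, τ = σ + Pi.single i k := by
  refine (CounterRel.inc i).star.of_iff fun σ τ => (reflTransGen_eq_add_iff _).trans ?_
  simp [← Pi.single_smul]

theorem counterRel_exists_update (i : Fin m) :
    CounterRel fun σ τ => ∃ y, τ = Function.update σ i y := by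
  refine ((counterRel_add i).flip.comp (counterRel_add i)).of_iff fun σ τ => ?_
  constructor
  · rintro ⟨ρ, ⟨k, rfl⟩, l, rfl⟩
    refine ⟨ρ i + l, ?_⟩
    ext j
    by_cases h : j = i <;> simp_all
  · rintro ⟨y, rfl⟩
    refine ⟨Function.update σ i 0, ⟨σ i, ?_⟩, y, ?_⟩ <;>
    · ext j
      by_cases h : j = i <;> simp_all

theorem CounterRel.guess {R : (Fin (m + 1) → ℕ) → (Fin (m + 1) → ℕ) → Prop} (hR : CounterRel R) :
    CounterRel fun σ τ => ∃ x y, R (vecCons x σ) (vecCons y τ) := by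
  have update_zero (x y : ℕ) (σ : Fin m → ℕ) :
      Function.update (vecCons x σ) 0 y = vecCons y σ := Fin.update_cons_zero _ _ _
  have havoc := counterRel_exists_update (0 : Fin (m + 1))
  refine ((havoc.comp hR).comp havoc.flip).newCounter.of_iff fun σ τ => ?_
  constructor
  · rintro ⟨_, ⟨_, ⟨x, rfl⟩, h⟩, y, rfl⟩
    rw [update_zero, update_zero] at h
    exact ⟨x, y, h⟩
  · rintro ⟨x, y, h⟩
    exact ⟨_, ⟨_, ⟨x, rfl⟩, by rwa [update_zero]⟩, y, (update_zero _ _ _).symm⟩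

/-- The predicate `A` on counter values is a test if some counter program halts exactly when `A`
holds, without having changed the counters. -/
def IsTest (A : (Fin m → ℕ) → Prop) : Prop :=
  CounterRel fun σ τ => A σ ∧ τ = σ

variable {A B : (Fin m → ℕ) → Prop}

theorem IsTest.of_iff (hA : IsTest A) (h : ∀ σ, A σ ↔ B σ) : IsTest B :=
  CounterRel.of_iff hA fun σ _ => and_congr_left' (h σ)

theorem IsTest.and (hA : IsTest A) (hB : IsTest B) : IsTest fun σ => A σ ∧ B σ := by
  refine (CounterRel.comp hA hB).of_iff fun σ τ => ?_
  constructor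
  · rintro ⟨_, ⟨hA, rfl⟩, hB, rfl⟩
    exact ⟨⟨hA, hB⟩, rfl⟩
  · rintro ⟨⟨hA, hB⟩, rfl⟩
    exact ⟨_, ⟨hA, rfl⟩, hB, rfl⟩

theorem isTest_eq_zero (i : Fin m) : IsTest fun σ => σ i = 0 :=
  .isZero i

theorem isTest_true : IsTest fun _ : Fin m → ℕ => True := by
  refine (CounterRel.isZero 0).newCounter.of_iff fun σ τ => ?_
  simp

theorem IsTest.add_single (hA : IsTest A) (i : Fin m) : IsTest fun σ => A (σ + Pi.single i 1) := by
  refine (CounterRel.comp (.inc i) (.comp hA (.dec i))).of_iff fun σ τ => ?_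
  constructor
  · rintro ⟨_, rfl, _, ⟨hA, rfl⟩, h⟩
    exact ⟨hA, (add_right_cancel h).symm⟩
  · rintro ⟨hA, rfl⟩
    exact ⟨_, rfl, _, ⟨hA, rfl⟩, rfl⟩

theorem exists_eq_add_single_iff {σ : Fin m → ℕ} {i : Fin m} :
    (∃ τ : Fin m → ℕ, σ = τ + Pi.single i 1) ↔ σ i ≠ 0 := by
  constructor
  · rintro ⟨τ, rfl⟩
    simp
  · intro h
    have single_le : Pi.single i 1 ≤ σ := by
      simpa [Pi.single, update_le_iff, Nat.one_le_iff_ne_zero] using h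
    exact ⟨σ - Pi.single i 1, (tsub_add_cancel_of_le single_le).symm⟩

theorem isTest_ne_zero (i : Fin m) : IsTest fun σ => σ i ≠ 0 := by
  refine ((CounterRel.dec i).comp (.inc i)).of_iff fun σ τ => ?_
  constructor
  · rintro ⟨ρ, hρ, rfl⟩
    exact ⟨exists_eq_add_single_iff.1 ⟨ρ, hρ⟩, hρ.symm⟩
  · rintro ⟨h, rfl⟩
    obtain ⟨ρ, hρ⟩ := exists_eq_add_single_iff.2 h
    exact ⟨ρ, hρ, hρ⟩

theorem IsTest.exists {A : ℕ → (Fin m → ℕ) → Prop}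
    (hA : IsTest fun σ : Fin (m + 1) → ℕ => A (σ 0) (vecTail σ)) :
    IsTest fun σ => ∃ x, A x σ := by
  refine (CounterRel.guess hA).of_iff fun σ τ => ?_
  simp

theorem reflTransGen_exchange_invariant {A : Type*} [AddCommMonoid A] {u w x y : A}
    (h : ReflTransGen (fun x y => ∃ z, x = z + u ∧ y = z + w) x y) :
    ∃ k : ℕ, x + k • w = y + k • u := by
  induction h with
  | refl => exact ⟨0, by rw [zero_nsmul, zero_nsmul]⟩
  | tail _ h ih =>
    obtain ⟨k, hk⟩ := ih
    obtain ⟨z, rfl, rfl⟩ := h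
    refine ⟨k + 1, ?_⟩
    rw [succ_nsmul, succ_nsmul, ← add_assoc, hk]
    abel

theorem reflTransGen_exchange {A : Type*} [AddCommMonoid A] (u w z : A) (k : ℕ) :
    ReflTransGen (fun x y => ∃ z, x = z + u ∧ y = z + w) (z + k • u) (z + k • w) := by
  induction k generalizing z with
  | zero => rw [zero_nsmul, zero_nsmul]
  | succ k ih =>
    refine .head ⟨z + k • u, by rw [succ_nsmul, add_assoc], rfl⟩ ?_
    convert ih (z + w) using 1
    · abel
    · rw [succ_nsmul']
      abel

theorem counterRel_exchange (i j l : Fin m) : CounterRel fun σ τ =>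
    ∃ ρ, σ = ρ + (Pi.single i 1 + Pi.single j 1) ∧ τ = ρ + Pi.single l 1 := by
  refine (((CounterRel.dec i).comp (.dec j)).comp (.inc l)).of_iff fun σ τ => ?_
  constructor
  · rintro ⟨ρ, ⟨_, rfl, rfl⟩, rfl⟩
    exact ⟨ρ, by abel, rfl⟩
  · rintro ⟨ρ, rfl, rfl⟩
    exact ⟨ρ, ⟨ρ + Pi.single j 1, by abel, rfl⟩, rfl⟩

-- The new counter records how often the other two are decremented, so that this can be undone.
theorem isTest_eq (i j : Fin m) : IsTest fun σ => σ i = σ j := by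
  obtain rfl | hij := eq_or_ne i j
  · exact isTest_true.of_iff fun σ => by simp
  have exchange := (counterRel_exchange i.succ j.succ (0 : Fin (m + 1))).star
  have emptied := (isTest_eq_zero i.succ).and (isTest_eq_zero j.succ)
  refine ((exchange.comp emptied).comp exchange.flip).newCounter.of_iff fun σ τ => ?_
  constructor
  · rintro ⟨_, ⟨ρ, hσ, ⟨hi, hj⟩, rfl⟩, hτ⟩
    obtain ⟨k, hk⟩ := reflTransGen_exchange_invariant hσ
    obtain ⟨l, hl⟩ := reflTransGen_exchange_invariant hτ
    obtain rfl : k = l := by simpa using (congrFun hk 0).trans (congrFun hl 0).symm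
    have hσi : σ i = k := by simpa [hi, hij] using congrFun hk i.succ
    have hσj : σ j = k := by simpa [hj, hij.symm] using congrFun hk j.succ
    exact ⟨hσi.trans hσj.symm, by simpa using hl.trans hk.symm⟩
  · rintro ⟨h, rfl⟩
    set rest : Fin (m + 1) → ℕ := vecCons 0 fun l => if l = i ∨ l = j then 0 else τ l
    have hτ := reflTransGen_exchange (Pi.single i.succ 1 + Pi.single j.succ 1) (Pi.single 0 1)
      rest (τ i)
    have rest_add : rest + τ i • (Pi.single i.succ 1 + Pi.single j.succ 1) = vecCons 0 τ := by
      ext l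
      cases l using Fin.cases with
      | zero => simp [rest]
      | succ l =>
        by_cases hli : l = i
        · simp [rest, hli, hij]
        by_cases hlj : l = j
        · simp [rest, hlj, hij.symm, h]
        simp [rest, hli, hlj]
    rw [rest_add] at hτ
    exact ⟨_, ⟨_, hτ, ⟨by simp [rest], by simp [rest]⟩, rfl⟩, hτ⟩

theorem isTest_eq_add_one (i j : Fin m) : IsTest fun σ => σ j = σ i + 1 := by
  have h : IsTest fun σ : Fin (m + 1) → ℕ => σ 0 = vecTail σ i ∧ vecTail σ j = σ 0 + 1 := by
    refine (isTest_eq 0 i.succ).and (((isTest_eq j.succ 0).add_single 0).of_iff fun σ => ?_)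
    simp [vecTail]
  exact (IsTest.exists (A := fun x σ => x = σ i ∧ σ j = x + 1) h).of_iff fun σ => by simp

theorem IsTest.assign {A : ℕ → (Fin m → ℕ) → Prop}
    (hA : IsTest fun σ : Fin (m + 1) → ℕ => A (σ 0) (vecTail σ)) (i : Fin m) :
    CounterRel fun σ τ => ∃ y, A y σ ∧ τ = Function.update σ i y := by
  refine ((CounterRel.comp hA (counterRel_exists_update i.succ)).comp
    (isTest_eq 0 i.succ)).guess.of_iff fun σ τ => ?_
  have update_succ (x y : ℕ) :
      Function.update (vecCons x σ) i.succ y = vecCons x (Function.update σ i y) :=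
    (Fin.cons_update (α := fun _ => ℕ) x σ i y).symm
  constructor
  · rintro ⟨x, y, _, ⟨_, ⟨hA, rfl⟩, z, rfl⟩, h, hτ⟩
    rw [update_succ] at h hτ
    obtain ⟨rfl, rfl⟩ := Matrix.vecCons_inj.1 hτ
    obtain rfl : y = z := by simpa using h
    exact ⟨y, hA, rfl⟩
  · rintro ⟨y, hA, rfl⟩
    refine ⟨y, y, _, ⟨_, ⟨hA, rfl⟩, y, rfl⟩, ?_, (update_succ y y).symm⟩
    simp [update_succ]

/-- One round of a loop which counts its rounds: the counter increases from `k` to `k + 1`, while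
the other component of the state changes from `x` to `y` with `A k x y`. -/
def LoopStep (A : ℕ → ℕ → ℕ → Prop) (p q : ℕ × ℕ) : Prop :=
  q.1 = p.1 + 1 ∧ A p.1 p.2 q.2

theorem counterRel_loopStep {A : ℕ → ℕ → ℕ → (Fin m → ℕ) → Prop}
    (hA : IsTest fun σ : Fin (m + 3) → ℕ => A (σ 1) (σ 2) (σ 0) (vecTail (vecTail (vecTail σ)))) :
    CounterRel fun σ τ : Fin (m + 2) → ℕ => ∃ y, A (σ 0) (σ 1) y (vecTail (vecTail σ)) ∧
      τ = vecCons (σ 0 + 1) (vecCons y (vecTail (vecTail σ))) := by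
  have assign := IsTest.assign
    (A := fun y (σ : Fin (m + 2) → ℕ) => A (σ 0) (σ 1) y (vecTail (vecTail σ))) hA 1
  refine (assign.comp (.inc 0)).of_iff fun σ τ => ?_
  have update_add (y : ℕ) : Function.update σ 1 y + Pi.single 0 1 =
      vecCons (σ 0 + 1) (vecCons y (vecTail (vecTail σ))) := by
    ext i
    obtain rfl | rfl | ⟨i, rfl⟩ : i = 0 ∨ i = 1 ∨ ∃ j : Fin m, i = j.succ.succ := by
      refine Fin.cases (.inl rfl) (fun i => .inr ?_) i
      exact Fin.cases (.inl rfl) (fun i => .inr ⟨i, rfl⟩) i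
    · simp
    · simp
    · have : i.succ.succ ≠ 1 := Fin.succ_succ_ne_one i
      simp [vecTail, this]
  constructor
  · rintro ⟨_, ⟨y, hA, rfl⟩, rfl⟩
    exact ⟨y, hA, update_add y⟩
  · rintro ⟨y, hA, rfl⟩
    exact ⟨_, ⟨y, hA, rfl⟩, (update_add y).symm⟩

theorem IsTest.loop {A : ℕ → ℕ → ℕ → (Fin m → ℕ) → Prop}
    (hA : IsTest fun σ : Fin (m + 3) → ℕ => A (σ 1) (σ 2) (σ 0) (vecTail (vecTail (vecTail σ))))
    (i j l : Fin m) :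
    IsTest fun σ => ReflTransGen (LoopStep fun k x y => A k x y σ) (0, σ i) (σ l, σ j) := by
  have init : IsTest fun σ : Fin (m + 2) → ℕ => σ 0 = 0 ∧ σ 1 = σ i.succ.succ :=
    (isTest_eq_zero 0).and (isTest_eq 1 _)
  have final : IsTest fun σ : Fin (m + 2) → ℕ => σ 0 = σ l.succ.succ ∧ σ 1 = σ j.succ.succ :=
    (isTest_eq 0 _).and (isTest_eq 1 _)
  refine ((CounterRel.comp init (counterRel_loopStep hA).star).comp final).guess.guess.of_iff
    fun σ τ => ?_
  have loop_iff (p : ℕ × ℕ) (ρ : Fin (m + 2) → ℕ) :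
      ReflTransGen (fun σ τ : Fin (m + 2) → ℕ => ∃ y, A (σ 0) (σ 1) y (vecTail (vecTail σ)) ∧
        τ = vecCons (σ 0 + 1) (vecCons y (vecTail (vecTail σ)))) (vecCons p.1 (vecCons p.2 σ)) ρ ↔
      ∃ q, ReflTransGen (LoopStep fun k x y => A k x y σ) p q ∧
        ρ = vecCons q.1 (vecCons q.2 σ) := by
    refine reflTransGen_map_iff (f := fun p : ℕ × ℕ => vecCons p.1 (vecCons p.2 σ)) ?_ p ρ
    simp [LoopStep]
  constructor
  · rintro ⟨x, x', k, k', _, ⟨_, ⟨⟨hk, hx⟩, rfl⟩, h⟩, ⟨hk', hx'⟩, hτ⟩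
    obtain ⟨q, hq, rfl⟩ := (loop_iff (k, x) _).1 h
    obtain ⟨-, hτ⟩ := Matrix.vecCons_inj.1 hτ
    obtain ⟨-, rfl⟩ := Matrix.vecCons_inj.1 hτ
    obtain rfl : k = 0 := hk
    obtain rfl : x = τ i := hx
    obtain rfl : q = (τ l, τ j) := Prod.ext hk' hx'
    exact ⟨hq, rfl⟩
  · rintro ⟨h, rfl⟩
    exact ⟨τ i, τ j, 0, τ l, _,
      ⟨_, ⟨⟨rfl, rfl⟩, rfl⟩, (loop_iff (0, τ i) _).2 ⟨_, h, rfl⟩⟩, ⟨rfl, rfl⟩, rfl⟩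

section Testable

variable {ι κ : Type*}

/-- A predicate on families of numbers is testable if it is a test on the values of every family of
counters (which may contain a counter several times). -/
def Testable (A : (ι → ℕ) → Prop) : Prop :=
  ∀ ⦃m : ℕ⦄ (e : ι → Fin m), IsTest fun σ => A (σ ∘ e)

theorem Testable.of_iff {A B : (ι → ℕ) → Prop} (hA : Testable A) (h : ∀ v, A v ↔ B v) :
    Testable B :=
  fun _ e => (hA e).of_iff fun _ => h _

theorem Testable.reindex {A : (ι → ℕ) → Prop} (hA : Testable A) (f : ι → κ) :
    Testable fun v => A (v ∘ f) :=
  fun _ e => hA (e ∘ f)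

theorem Testable.and {A B : (ι → ℕ) → Prop} (hA : Testable A) (hB : Testable B) :
    Testable fun v => A v ∧ B v :=
  fun _ e => (hA e).and (hB e)

theorem testable_forall_fin {n : ℕ} {A : Fin n → (ι → ℕ) → Prop} (hA : ∀ i, Testable (A i)) :
    Testable fun v => ∀ i, A i v := by
  induction n with
  | zero => exact fun _ _ => isTest_true.of_iff fun _ => by simp
  | succ n ih =>
    exact ((hA 0).and (ih fun i => hA i.succ)).of_iff fun v => by rw [Fin.forall_fin_succ]

theorem Testable.exists {A : ℕ → (ι → ℕ) → Prop}
    (hA : Testable fun v : Option ι → ℕ => A (v none) (v ∘ some)) :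
    Testable fun v => ∃ x, A x v :=
  fun _ e => IsTest.exists (A := fun x σ => A x (σ ∘ e)) (hA fun i => i.elim 0 fun i => (e i).succ)

theorem Testable.exists_fin {n : ℕ} {A : (Fin n → ℕ) → (ι → ℕ) → Prop}
    (hA : Testable fun v : Fin n ⊕ ι → ℕ => A (v ∘ Sum.inl) (v ∘ Sum.inr)) :
    Testable fun v => ∃ w, A w v := by
  induction n generalizing ι with
  | zero =>
    refine (hA.reindex (Sum.elim Fin.elim0 id)).of_iff fun v => ?_
    rw [Unique.exists_iff]
    exact iff_of_eq (congrArg₂ A (Subsingleton.elim _ _) rfl)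
  | succ n ih =>
    have h : Testable fun v : Option ι → ℕ =>
        ∃ w : Fin n → ℕ, A (vecCons (v none) w) (v ∘ some) := by
      refine ih ((hA.reindex (Sum.elim (vecCons (.inr none) .inl) (.inr ∘ some))).of_iff
        fun v => ?_)
      refine iff_of_eq (congrArg₂ A ?_ rfl)
      ext i
      cases i using Fin.cases <;> rfl
    exact h.exists.of_iff fun v => by rw [Fin.exists_fin_succ_pi]

theorem testable_eq_zero (i : ι) : Testable fun v => v i = 0 :=
  fun _ e => isTest_eq_zero (e i)

theorem testable_ne_zero (i : ι) : Testable fun v => v i ≠ 0 :=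
  fun _ e => isTest_ne_zero (e i)

theorem testable_eq (i j : ι) : Testable fun v => v i = v j :=
  fun _ e => isTest_eq (e i) (e j)

theorem testable_eq_add_one (i j : ι) : Testable fun v => v j = v i + 1 :=
  fun _ e => isTest_eq_add_one (e i) (e j)

theorem Testable.loop {A : ℕ → ℕ → ℕ → (ι → ℕ) → Prop}
    (hA : Testable fun v : Fin 3 ⊕ ι → ℕ =>
      A (v (.inl 0)) (v (.inl 1)) (v (.inl 2)) (v ∘ Sum.inr)) (i j l : ι) :
    Testable fun v => ReflTransGen (LoopStep fun k x y => A k x y v) (0, v i) (v l, v j) :=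
  fun _ e => IsTest.loop (A := fun k x y σ => A k x y (σ ∘ e))
    (hA (Sum.elim ![1, 2, 0] fun i => (e i).succ.succ.succ)) (e i) (e j) (e l)

end Testable

theorem reflTransGen_loopStep_iff {g : ℕ → ℕ → ℕ} {x n y : ℕ} :
    ReflTransGen (LoopStep fun k x y => y = g k x) (0, x) (n, y) ↔ y = Nat.rec x g n := by
  constructor
  · suffices ∀ q, ReflTransGen (LoopStep fun k x y => y = g k x) (0, x) q →
        q.2 = Nat.rec x g q.1 from this (n, y)
    intro q h
    induction h with
    | refl => rfl
    | @tail p q _ h ih => rw [h.2, h.1, ih]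
  · rintro rfl
    induction n with
    | zero => exact .refl
    | succ n ih => exact ih.tail ⟨rfl, rfl⟩

theorem exists_reflTransGen_loopStep_iff {A : ℕ → Prop} {n : ℕ} :
    (∃ x y, ReflTransGen (LoopStep fun k _ _ => A k) (0, x) (n, y)) ↔ ∀ k < n, A k := by
  constructor
  · rintro ⟨x, y, h⟩
    suffices ∀ q, ReflTransGen (LoopStep fun k _ _ => A k) (0, x) q → ∀ k < q.1, A k from this _ h
    intro q h
    induction h with
    | refl => exact fun k hk => absurd hk k.not_lt_zero
    | @tail p q _ h ih =>
      intro k hk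
      rw [h.1, Nat.lt_succ_iff_lt_or_eq] at hk
      exact hk.elim (ih k) fun hk => hk ▸ h.2
  · intro h
    refine ⟨0, 0, ?_⟩
    induction n with
    | zero => exact .refl
    | succ n ih =>
      exact (ih fun k hk => h k (hk.trans n.lt_succ_self)).tail ⟨rfl, h n n.lt_succ_self⟩

end CounterRel

section CounterComputable

open Relation

/-- A partial function is counter computable if its graph is testable, where `none` stands for the
value and `some i` for the `i`-th argument. -/
def CounterComputable {n : ℕ} (f : List.Vector ℕ n →. ℕ) : Prop :=
  Testable fun v : Option (Fin n) → ℕ => v none ∈ f (.ofFn fun i => v (some i))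

variable {ι : Type*} {n : ℕ}

theorem CounterComputable.testable {f : List.Vector ℕ n →. ℕ} (hf : CounterComputable f)
    (o : ι) (args : Fin n → ι) : Testable fun v : ι → ℕ => v o ∈ f (.ofFn fun i => v (args i)) :=
  Testable.reindex hf fun i => i.elim o args

theorem Testable.forall_lt {A : ℕ → (ι → ℕ) → Prop}
    (hA : Testable fun v : Option ι → ℕ => A (v none) fun i => v (some i)) (i : ι) :
    Testable fun v => ∀ k < v i, A k v := by
  have hstep : Testable fun v : Fin 3 ⊕ Option (Option ι) → ℕ =>
      A (v (.inl 0)) fun i => v (.inr (some (some i))) :=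
    hA.reindex fun i => i.elim (Sum.inl 0) fun i => .inr (some (some i))
  have hloop := Testable.loop (A := fun k _ _ v => A k fun i => v (some (some i))) hstep
    (some none) none (some (some i))
  have h : Testable fun v : Option ι → ℕ => ∃ y,
      ReflTransGen (LoopStep fun k _ _ => A k fun i => v (some i)) (0, v none) (v (some i), y) :=
    Testable.exists hloop
  refine (Testable.exists (A := fun x v => ∃ y,
    ReflTransGen (LoopStep fun k _ _ => A k v) (0, x) (v i, y)) h).of_iff fun v => ?_
  exact exists_reflTransGen_loopStep_iff

theorem counterComputable_zero :
    CounterComputable ((fun _ => 0 : List.Vector ℕ 0 → ℕ) : List.Vector ℕ 0 →. ℕ) :=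
  (testable_eq_zero none).of_iff fun v => by simp

theorem counterComputable_succ :
    CounterComputable ((fun v => v.head.succ : List.Vector ℕ 1 → ℕ) : List.Vector ℕ 1 →. ℕ) :=
  (testable_eq_add_one (some 0) none).of_iff fun v => by simp [List.Vector.ofFn]

theorem counterComputable_get (i : Fin n) :
    CounterComputable ((fun v => v.get i : List.Vector ℕ n → ℕ) : List.Vector ℕ n →. ℕ) :=
  (testable_eq none (some i)).of_iff fun v => by simp

theorem mem_mOfFn_iff {α : Type*} {f : Fin n → Part α} {w : List.Vector α n} :
    w ∈ List.Vector.mOfFn f ↔ ∀ i, w.get i ∈ f i := by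
  induction n with
  | zero => simp [List.Vector.mOfFn, List.Vector.eq_nil w, pure]
  | succ n ih =>
    obtain ⟨x, w, rfl⟩ := w.exists_eq_cons
    simp only [List.Vector.mOfFn, pure, Part.bind_eq_bind, Part.mem_bind_iff, Part.mem_some_iff, ih,
      Fin.forall_fin_succ, List.Vector.get_zero, List.Vector.head_cons, List.Vector.get_cons_succ]
    constructor
    · rintro ⟨y, hy, v, hv, h⟩
      obtain ⟨rfl, rfl⟩ : x = y ∧ w = v := by simpa using (List.Vector.eq_cons_iff y _ v).1 h
      exact ⟨hy, hv⟩
    · rintro ⟨hx, hw⟩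
      exact ⟨x, hx, w, hw, rfl⟩

theorem CounterComputable.comp {k : ℕ} {f : List.Vector ℕ k →. ℕ}
    {g : Fin k → List.Vector ℕ n →. ℕ} (hf : CounterComputable f)
    (hg : ∀ i, CounterComputable (g i)) :
    CounterComputable fun v => (List.Vector.mOfFn fun i => g i v).bind f := by
  have h : Testable fun v : Fin k ⊕ Option (Fin n) → ℕ =>
      (∀ i, v (.inl i) ∈ g i (.ofFn fun j => v (.inr (some j)))) ∧
        v (.inr none) ∈ f (.ofFn fun i => v (.inl i)) :=
    (testable_forall_fin fun i => (hg i).testable (Sum.inl i) fun j => Sum.inr (some j)).and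
      (hf.testable (Sum.inr none) Sum.inl)
  refine (Testable.exists_fin (A := fun w v =>
    (∀ i, w i ∈ g i (.ofFn fun j => v (some j))) ∧ v none ∈ f (.ofFn w)) h).of_iff fun v => ?_
  refine Iff.trans ?_ Part.mem_bind_iff.symm
  simp only [mem_mOfFn_iff]
  constructor
  · rintro ⟨w, hw, h⟩
    exact ⟨_, by simpa using hw, h⟩
  · rintro ⟨w, hw, h⟩
    exact ⟨w.get, hw, by rwa [List.Vector.ofFn_get]⟩

theorem CounterComputable.prec {f : List.Vector ℕ n → ℕ} {g : List.Vector ℕ (n + 2) → ℕ}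
    (hf : CounterComputable (f : List.Vector ℕ n →. ℕ))
    (hg : CounterComputable (g : List.Vector ℕ (n + 2) →. ℕ)) :
    CounterComputable ((fun v => v.head.rec (f v.tail) fun y IH => g (y ::ᵥ IH ::ᵥ v.tail) :
      List.Vector ℕ (n + 1) → ℕ) : List.Vector ℕ (n + 1) →. ℕ) := by
  have hstep : Testable fun v : Fin 3 ⊕ Option (Option (Fin (n + 1))) → ℕ =>
      v (.inl 2) = g (v (.inl 0) ::ᵥ v (.inl 1) ::ᵥ .ofFn fun i => v (.inr (some (some i.succ)))) :=
    (hg.testable (.inl 2) (Matrix.vecCons (.inl 0)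
      (Matrix.vecCons (.inl 1) fun i => .inr (some (some i.succ))))).of_iff fun v =>
        Part.mem_some_iff
  have hinit : Testable fun v : Option (Option (Fin (n + 1))) → ℕ =>
      v none = f (.ofFn fun i => v (some (some i.succ))) :=
    (hf.testable none fun i => some (some i.succ)).of_iff fun v => Part.mem_some_iff
  have hloop := Testable.loop (A := fun k x y v =>
    y = g (k ::ᵥ x ::ᵥ .ofFn fun i => v (some (some i.succ)))) hstep none (some none)
      (some (some 0))
  refine (Testable.exists (A := fun x v => x = f (.ofFn fun i => v (some i.succ)) ∧
    ReflTransGen (LoopStep fun k x y => y = g (k ::ᵥ x ::ᵥ .ofFn fun i => v (some i.succ)))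
      (0, x) (v (some 0), v none)) (hinit.and hloop)).of_iff fun v => ?_
  simp [reflTransGen_loopStep_iff]

theorem CounterComputable.rfind {f : List.Vector ℕ (n + 1) → ℕ}
    (hf : CounterComputable (f : List.Vector ℕ (n + 1) →. ℕ)) :
    CounterComputable fun v => Nat.rfind fun k => Part.some (decide (f (k ::ᵥ v) = 0)) := by
  have hval : Testable fun v : Option (Option (Fin n)) → ℕ =>
      v none = f (v (some none) ::ᵥ .ofFn fun i => v (some (some i))) :=
    (hf.testable none (Matrix.vecCons (some none) fun i => some (some i))).of_iff fun v =>
      Part.mem_some_iff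
  have heq : Testable fun v : Option (Fin n) → ℕ => f (v none ::ᵥ .ofFn fun i => v (some i)) = 0 :=
    (Testable.exists (A := fun x v => x = f (v none ::ᵥ .ofFn fun i => v (some i)) ∧ x = 0)
      (hval.and (testable_eq_zero none))).of_iff fun v => by simp
  have hne : Testable fun v : Option (Fin n) → ℕ => f (v none ::ᵥ .ofFn fun i => v (some i)) ≠ 0 :=
    (Testable.exists (A := fun x v => x = f (v none ::ᵥ .ofFn fun i => v (some i)) ∧ x ≠ 0)
      (hval.and (testable_ne_zero none))).of_iff fun v => by simp
  have hmin : Testable fun v : Option (Fin n) → ℕ =>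
      ∀ k < v none, f (k ::ᵥ .ofFn fun i => v (some i)) ≠ 0 :=
    Testable.forall_lt (hne.reindex fun i => i.elim none fun i => some (some i)) none
  refine (heq.and hmin).of_iff fun v => ?_
  refine Iff.trans ?_ Nat.mem_rfind.symm
  simp

theorem counterComputable_of_primrec {f : List.Vector ℕ n → ℕ} (hf : Nat.Primrec' f) :
    CounterComputable (f : List.Vector ℕ n →. ℕ) := by
  induction hf with
  | zero => exact counterComputable_zero
  | succ => exact counterComputable_succ
  | get i => exact counterComputable_get i
  | @comp n k f g _ _ hf hg =>
    have hpure (v : List.Vector ℕ n) : List.Vector.mOfFn (fun i => Part.some (g i v)) =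
        Part.some (.ofFn fun i => g i v) := List.Vector.mOfFn_pure fun i => g i v
    refine (hf.comp hg).of_iff fun v => ?_
    simp only [PFun.coe_val, hpure]
    exact iff_of_eq (congrArg (v none ∈ ·) (Part.bind_some _ _))
  | prec _ _ hf hg => exact hf.prec hg

theorem counterComputable_of_partrec {f : List.Vector ℕ n →. ℕ} (hf : Nat.Partrec' f) :
    CounterComputable f := by
  induction hf with
  | prim hf => exact counterComputable_of_primrec hf
  | comp g _ _ hf hg => exact hf.comp hg
  | rfind _ hf => exact hf.rfind

end CounterComputable

section Encoding

open Matrix (vecCons vecTail)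
open Relation

theorem isTest_dom_of_partrec {f : ℕ →. ℕ} (hf : Partrec f) :
    IsTest fun σ : Fin 1 → ℕ => (f (σ 0)).Dom := by
  have graph := counterComputable_of_partrec (Nat.Partrec'.part_iff₁.2 hf)
  have h : Testable fun v : Fin 1 → ℕ => ∃ y, y ∈ f (v 0) :=
    (Testable.exists (A := fun y v => y ∈ f (List.Vector.ofFn v).head) graph).of_iff fun v => by
      simp
  exact (h id).of_iff fun σ => Part.dom_iff_mem.symm

/-- The Gödel number of the values of `m` counters. The last counter belongs to the first prime, so
that a new counter in front gets a new prime and leaves the primes of the others unchanged. -/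
noncomputable def godelNumber {m : ℕ} (σ : Fin m → ℕ) : ℕ :=
  ∏ i, Nat.nth Nat.Prime i.rev ^ σ i

variable {m : ℕ}

theorem godelNumber_vecCons (x : ℕ) (σ : Fin m → ℕ) :
    godelNumber (vecCons x σ) = Nat.nth Nat.Prime m ^ x * godelNumber σ := by
  simp [godelNumber, Fin.prod_univ_succ]

theorem godelNumber_add_single (σ : Fin m → ℕ) (i : Fin m) :
    godelNumber (σ + Pi.single i 1) = Nat.nth Nat.Prime i.rev * godelNumber σ := by
  simp only [godelNumber, Pi.add_apply, pow_add, Finset.prod_mul_distrib]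
  rw [mul_comm]
  congr 1
  rw [Finset.prod_eq_single i]
  · rw [Pi.single_eq_same, pow_one]
  · intro j _ hj
    rw [Pi.single_eq_of_ne hj, pow_zero]
  · exact fun hi => (hi (Finset.mem_univ i)).elim

theorem nth_prime_dvd_godelNumber_iff (σ : Fin m → ℕ) (i : Fin m) :
    Nat.nth Nat.Prime i.rev ∣ godelNumber σ ↔ σ i ≠ 0 := by
  have hi := Nat.prime_nth_prime i.rev
  have dvd_iff (j : Fin m) :
      Nat.nth Nat.Prime i.rev ∣ Nat.nth Nat.Prime j.rev ^ σ j ↔ i = j ∧ σ j ≠ 0 := by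
    rcases eq_or_ne (σ j) 0 with h | h
    · simp only [h, pow_zero, Nat.dvd_one, hi.ne_one, ne_eq, not_true, and_false]
    · rw [hi.prime.dvd_pow_iff_dvd h, Nat.prime_dvd_prime_iff_eq hi (Nat.prime_nth_prime _),
        (Nat.nth_injective Nat.infinite_setOfPred_prime).eq_iff, Fin.val_inj, Fin.rev_inj,
        and_iff_left h]
  simp only [godelNumber, hi.prime.dvd_finsetProd_iff, Finset.mem_univ, true_and, dvd_iff,
    exists_eq_left']

/-- `S` simulates `R` if it relates Gödel numbers to Gödel numbers only, and does so according to
`R`. -/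
def Simulates (S : ℕ → ℕ → Prop) (R : (Fin m → ℕ) → (Fin m → ℕ) → Prop) : Prop :=
  ∀ σ n, S (godelNumber σ) n ↔ ∃ τ, R σ τ ∧ n = godelNumber τ

theorem Simulates.comp {S S' : ℕ → ℕ → Prop} {R R' : (Fin m → ℕ) → (Fin m → ℕ) → Prop}
    (h : Simulates S R) (h' : Simulates S' R') : Simulates (Comp S S') (Comp R R') := by
  intro σ n
  constructor
  · rintro ⟨k, hS, hS'⟩
    obtain ⟨ρ, hρ, rfl⟩ := (h σ k).1 hS
    obtain ⟨τ, hτ, rfl⟩ := (h' ρ n).1 hS'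
    exact ⟨τ, ⟨ρ, hρ, hτ⟩, rfl⟩
  · rintro ⟨τ, ⟨ρ, hρ, hτ⟩, rfl⟩
    exact ⟨_, (h σ _).2 ⟨ρ, hρ, rfl⟩, (h' ρ _).2 ⟨τ, hτ, rfl⟩⟩

theorem Realizable.exists_simulates_newCounter {M : Type*} [Monoid M] {a b c d : M}
    (hbc : Commute b c) {S : ℕ → ℕ → Prop} (hS : Realizable a b c d S)
    {R : (Fin (m + 1) → ℕ) → (Fin (m + 1) → ℕ) → Prop} (h : Simulates S R) :
    ∃ S', Realizable a b c d S' ∧ Simulates S' fun σ τ => R (vecCons 0 σ) (vecCons 0 τ) := by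
  refine ⟨_, hS.comp (realizable_not_dvd hbc (Nat.prime_nth_prime m).ne_zero), fun σ n => ?_⟩
  have not_dvd_iff (x : ℕ) (τ : Fin m → ℕ) :
      ¬ Nat.nth Nat.Prime m ∣ godelNumber (vecCons x τ) ↔ x = 0 := by
    simpa using (nth_prime_dvd_godelNumber_iff (vecCons x τ) 0).not
  have godelNumber_zero (σ : Fin m → ℕ) : godelNumber (vecCons 0 σ) = godelNumber σ := by
    rw [godelNumber_vecCons, pow_zero, one_mul]
  rw [← godelNumber_zero]
  constructor
  · rintro ⟨k, hk, hdvd, rfl⟩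
    obtain ⟨τ, hτ, rfl⟩ := (h _ _).1 hk
    obtain ⟨x, τ, rfl⟩ : ∃ x τ', τ = vecCons x τ' := ⟨_, _, (Matrix.cons_head_tail τ).symm⟩
    obtain rfl := (not_dvd_iff x τ).1 hdvd
    exact ⟨τ, hτ, godelNumber_zero τ⟩
  · rintro ⟨τ, hτ, rfl⟩
    rw [← godelNumber_zero τ]
    exact ⟨_, (h _ _).2 ⟨_, hτ, rfl⟩, (not_dvd_iff 0 τ).2 rfl, rfl⟩

theorem exists_realizable_simulates {M : Type*} [Monoid M] {a b c d : M} (hbc : Commute b c)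
    {R : (Fin m → ℕ) → (Fin m → ℕ) → Prop} (hR : CounterRel R) :
    ∃ S, Realizable a b c d S ∧ Simulates S R := by
  induction hR with
  | inc i =>
    refine ⟨_, realizable_linear hbc 1 (Nat.nth Nat.Prime i.rev), fun σ n => ?_⟩
    simp [godelNumber_add_single]
  | dec i =>
    refine ⟨_, realizable_linear hbc (Nat.nth Nat.Prime i.rev) 1, fun σ n => ?_⟩
    constructor
    · rintro ⟨k, hσ, hn⟩
      obtain ⟨τ, rfl⟩ :=
        exists_eq_add_single_iff.2 ((nth_prime_dvd_godelNumber_iff σ i).1 ⟨k, hσ⟩)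
      rw [godelNumber_add_single] at hσ
      have hk := Nat.eq_of_mul_eq_mul_left (Nat.prime_nth_prime i.rev).pos hσ
      exact ⟨τ, rfl, by rw [hn, one_mul, hk]⟩
    · rintro ⟨τ, rfl, hn⟩
      exact ⟨godelNumber τ, godelNumber_add_single τ i, by rw [hn, one_mul]⟩
  | isZero i =>
    refine ⟨_, realizable_not_dvd hbc (Nat.prime_nth_prime i.rev).ne_zero, fun σ n => ?_⟩
    rw [nth_prime_dvd_godelNumber_iff, not_not]
    constructor
    · rintro ⟨h, rfl⟩
      exact ⟨σ, ⟨h, rfl⟩, rfl⟩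
    · rintro ⟨_, ⟨h, rfl⟩, rfl⟩
      exact ⟨h, rfl⟩
  | comp _ _ ihR ihS =>
    obtain ⟨R', hR', h⟩ := ihR
    obtain ⟨S', hS', h'⟩ := ihS
    exact ⟨_, hR'.comp hS', h.comp h'⟩
  | star _ ih =>
    obtain ⟨R', hR', h⟩ := ih
    exact ⟨_, hR'.reflTransGen, reflTransGen_map_iff h⟩
  | newCounter _ ih =>
    obtain ⟨R', hR', h⟩ := ih
    exact hR'.exists_simulates_newCounter hbc h

end Encoding

section Reduction

/-- The evaluation of words as a homomorphism from the free monoid. -/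
def evalHom : FreeMonoid (Fin 2 × Bool) →* G where
  toFun w := π w.toList
  map_one' := rfl
  map_mul' v w := by simp [π, ← FreeGroup.mul_mk]

theorem evalHom_surjective : Function.Surjective evalHom := by
  intro x
  obtain ⟨y, rfl⟩ := PresentedGroup.mk_surjective {oneRel} x
  exact ⟨.ofList y.toWord, congrArg _ FreeGroup.mk_toWord⟩

/-- A word which evaluates to `conjGen 2 ^ n`. -/
def powWord (n : ℕ) : List (Fin 2 × Bool) :=
  (List.range n).flatMap fun _ => [(1, true), (1, true), (0, true), (1, false), (1, false)]

theorem π_powWord (n : ℕ) : π (powWord n) = conjGen 2 ^ n := by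
  induction n with
  | zero => rfl
  | succ n ih =>
    have π_append (v w : List (Fin 2 × Bool)) : π (v ++ w) = π v * π w :=
      map_mul evalHom (.ofList v) (.ofList w)
    rw [powWord, List.range_succ, List.flatMap_append, π_append, ← powWord, ih, pow_succ]
    rfl

theorem primrec_powWord_two_pow : Primrec fun x : ℕ => powWord (2 ^ x) := by
  have hpow : Primrec fun x : ℕ => 2 ^ x := by
    have hmul : Primrec₂ fun _ y : ℕ => y * 2 :=
      Primrec.nat_mul.comp Primrec.snd (Primrec.const 2)
    refine (Primrec.nat_rec₁ 1 hmul).of_eq fun x => ?_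
    induction x with
    | zero => rfl
    | succ x ih => rw [pow_succ, ← ih]
  exact Primrec.list_flatMap (Primrec.list_range.comp hpow) (Primrec.const _).to₂

theorem exists_rational_mem_iff_of_partrec {f : ℕ →. ℕ} (hf : Partrec f) :
    ∃ T : Set G, IsRational T ∧ ∀ x, conjGen 2 ^ 2 ^ x ∈ T ↔ (f x).Dom := by
  obtain ⟨S, hS, h⟩ := exists_realizable_simulates isDecodable_conjGen.commute_bc
    (isTest_dom_of_partrec hf)
  obtain ⟨T, hT, hmem⟩ := isDecodable_conjGen.exists_isRational hS
  refine ⟨T, hT, fun x => ?_⟩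
  have godelNumber_const : godelNumber (fun _ : Fin 1 => x) = 2 ^ x := by
    simp [godelNumber, Nat.nth_prime_zero_eq_two]
  simp only [hmem, ← godelNumber_const, h _ _]
  simp

theorem exists_manyOneReducible_of_rePred {α : Type*} [Primcodable α] {p : α → Prop}
    (hp : REPred p) : ∃ ρ : RegularExpression (Fin 2 × Bool),
      p ≤₀ fun l => π l ∈ π '' (ρ.matches' : Set (List (Fin 2 × Bool))) := by
  obtain ⟨T, hT, hmem⟩ := exists_rational_mem_iff_of_partrec (Partrec.nat_iff.2 hp)
  obtain ⟨ρ, rfl⟩ := hT.exists_regularExpression evalHom_surjective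
  refine ⟨ρ, fun x => powWord (2 ^ Encodable.encode x),
    (primrec_powWord_two_pow.comp Primrec.encode).to_comp, fun x => ?_⟩
  have hx := hmem (Encodable.encode x)
  rw [← π_powWord] at hx
  refine Iff.trans ?_ hx.symm
  simp [Part.assert]

end Reduction

end RationalSubset

/-- The one-relator group `G` has undecidable rational subset membership problem:
there is a fixed regular expression `ρ` over the alphabet `Fin 2 × Bool` such that
membership of `π l` in the image in `G` of the language of `ρ` is undecidable. -/
theorem rational_subset_membership_undecidable :
    ∃ ρ : RegularExpression (Fin 2 × Bool),
      ¬ ComputablePred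
        (fun l : List (Fin 2 × Bool) => π l ∈ π '' (ρ.matches' : Set (List (Fin 2 × Bool)))) := by
  obtain ⟨ρ, hρ⟩ := RationalSubset.exists_manyOneReducible_of_rePred
    (ComputablePred.halting_problem_re 0)
  exact ⟨ρ, fun h =>
    ComputablePred.halting_problem 0 (ComputablePred.computable_of_manyOneReducible hρ h)⟩
end

section
/- Let H be a group, let U = ⟨{t} ∪ H ∪ tHt⁻¹⟩ and V = ⟨H ∪ tHt⁻¹⟩ be the submonoids of the free product H ∗ FG(t) generated by the indicated subsets (where tHt⁻¹ = {t * h * t⁻¹ | h ∈ H}). Then V ≤ U, and U \ V is an ideal of the monoid U: U \ V is nonempty and for every u ∈ U and every z ∈ U with z ∉ V, both u * z and z * u lie in U and not in V. -/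
open Monoid

/-!
The exponent sum of `t` is a homomorphism to `ℤ` that vanishes on `H` and `tHt⁻¹` and is `1` at
`t`, so it is nonnegative on `U`. A product of generators of `U` has exponent sum `0` only if `t`
does not occur among them, so `V` consists of the elements of `U` with exponent sum `0`; and a sum
of two nonnegative integers is `0` only if both are.
-/

section OrderedTarget

variable {M N : Type*} [Monoid M] [Monoid N] {φ : M →* N} {S T : Set M}

section Preorder

variable [Preorder N] [MulLeftMono N]

theorem one_le_map_of_mem_closure (hS : ∀ s ∈ S, 1 ≤ φ s) {x : M}
    (hx : x ∈ Submonoid.closure S) : 1 ≤ φ x := by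
  induction hx using Submonoid.closure_induction with
  | mem s hs => exact hS s hs
  | one => exact (map_one φ).ge
  | mul a b _ _ ha hb => exact (map_mul φ a b).symm ▸ one_le_mul ha hb

theorem one_le_map_of_mem_closure_union (hS : ∀ s ∈ S, φ s = 1) (hT : ∀ t ∈ T, 1 < φ t)
    {x : M} (hx : x ∈ Submonoid.closure (T ∪ S)) : 1 ≤ φ x :=
  one_le_map_of_mem_closure
    (fun _ h => h.elim (fun ht => (hT _ ht).le) fun hs => (hS _ hs).ge) hx

end Preorder

variable [PartialOrder N] [MulLeftMono N] [MulRightMono N]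

theorem map_mul_eq_one_iff_of_mem_closure_union (hS : ∀ s ∈ S, φ s = 1) (hT : ∀ t ∈ T, 1 < φ t)
    {x y : M} (hx : x ∈ Submonoid.closure (T ∪ S)) (hy : y ∈ Submonoid.closure (T ∪ S)) :
    φ (x * y) = 1 ↔ φ x = 1 ∧ φ y = 1 := by
  rw [map_mul]
  exact mul_eq_one_iff_of_one_le (one_le_map_of_mem_closure_union hS hT hx)
    (one_le_map_of_mem_closure_union hS hT hy)

theorem mem_closure_iff_map_eq_one_of_mem_closure_union (hS : ∀ s ∈ S, φ s = 1)
    (hT : ∀ t ∈ T, 1 < φ t) {x : M} (hx : x ∈ Submonoid.closure (T ∪ S)) :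
    x ∈ Submonoid.closure S ↔ φ x = 1 := by
  refine ⟨fun h => (Submonoid.closure_le (S := MonoidHom.mker φ)).2 hS h, ?_⟩
  induction hx using Submonoid.closure_induction with
  | mem s hs =>
    rcases hs with ht | hs
    · exact fun h => absurd h (hT s ht).ne'
    · exact fun _ => Submonoid.subset_closure hs
  | one => exact fun _ => one_mem _
  | mul a b ha hb iha ihb =>
    intro hab
    obtain ⟨ha_one, hb_one⟩ := (map_mul_eq_one_iff_of_mem_closure_union hS hT ha hb).1 hab
    exact mul_mem (iha ha_one) (ihb hb_one)

theorem mul_mem_closure_iff_of_mem_closure_union (hS : ∀ s ∈ S, φ s = 1)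
    (hT : ∀ t ∈ T, 1 < φ t) {x y : M} (hx : x ∈ Submonoid.closure (T ∪ S))
    (hy : y ∈ Submonoid.closure (T ∪ S)) :
    x * y ∈ Submonoid.closure S ↔ x ∈ Submonoid.closure S ∧ y ∈ Submonoid.closure S := by
  simpa only [mem_closure_iff_map_eq_one_of_mem_closure_union hS hT, mul_mem, hx, hy] using
    map_mul_eq_one_iff_of_mem_closure_union hS hT hx hy

theorem complement_is_ideal_general (hS : ∀ s ∈ S, φ s = 1) (hT : ∀ t ∈ T, 1 < φ t)
    (hT_nonempty : T.Nonempty) :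
    Submonoid.closure S ≤ Submonoid.closure (T ∪ S) ∧
    (∃ z, z ∈ Submonoid.closure (T ∪ S) ∧ z ∉ Submonoid.closure S) ∧
    ∀ u ∈ Submonoid.closure (T ∪ S), ∀ z ∈ Submonoid.closure (T ∪ S), z ∉ Submonoid.closure S →
      u * z ∈ Submonoid.closure (T ∪ S) ∧ u * z ∉ Submonoid.closure S ∧
      z * u ∈ Submonoid.closure (T ∪ S) ∧ z * u ∉ Submonoid.closure S := by
  refine ⟨Submonoid.closure_mono Set.subset_union_right, ?_, fun u hu z hz hzS => ?_⟩
  · obtain ⟨t, ht⟩ := hT_nonempty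
    have htU : t ∈ Submonoid.closure (T ∪ S) := Submonoid.subset_closure (Or.inl ht)
    refine ⟨t, htU, ?_⟩
    rw [mem_closure_iff_map_eq_one_of_mem_closure_union hS hT htU]
    exact (hT t ht).ne'
  · rw [mul_mem_closure_iff_of_mem_closure_union hS hT hu hz,
      mul_mem_closure_iff_of_mem_closure_union hS hT hz hu]
    exact ⟨mul_mem hu hz, fun h => hzS h.2, mul_mem hz hu, fun h => hzS h.1⟩

end OrderedTarget

section ExponentSum

variable {H α : Type*} [Monoid H]

/-- The total exponent of the free generators in an element of `H ∗ FG(α)`. It is written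
multiplicatively, so exponent sum `0` reads `1`, in order to be a monoid homomorphism. -/
def exponentSum : Coprod H (FreeGroup α) →* Multiplicative ℤ :=
  Coprod.lift 1 (FreeGroup.lift fun _ => Multiplicative.ofAdd 1)

@[simp]
theorem exponentSum_inl (h : H) : exponentSum (Coprod.inl h : Coprod H (FreeGroup α)) = 1 := by
  simp [exponentSum]

@[simp]
theorem exponentSum_inr_of (a : α) :
    exponentSum (Coprod.inr (FreeGroup.of a) : Coprod H (FreeGroup α)) =
      Multiplicative.ofAdd 1 := by
  simp [exponentSum]

end ExponentSum

/-- In the free product `H ∗ FG(t)`, let `U = ⟨{t} ∪ H ∪ tHt⁻¹⟩` and `V = ⟨H ∪ tHt⁻¹⟩`.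
Then `V ≤ U` and `U \ V` is a (nonempty) ideal of the monoid `U`. -/
theorem complement_is_ideal (H : Type) [Group H] :
    let t : Coprod H (FreeGroup Unit) := Coprod.inr (FreeGroup.of ())
    let U : Submonoid (Coprod H (FreeGroup Unit)) :=
      Submonoid.closure
        ({t} ∪ Set.range (fun h : H => Coprod.inl h) ∪
          {x | ∃ h : H, x = t * Coprod.inl h * t⁻¹})
    let V : Submonoid (Coprod H (FreeGroup Unit)) :=
      Submonoid.closure
        (Set.range (fun h : H => Coprod.inl h) ∪ {x | ∃ h : H, x = t * Coprod.inl h * t⁻¹})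
    V ≤ U ∧
    (∃ z, z ∈ U ∧ z ∉ V) ∧
    ∀ u ∈ U, ∀ z ∈ U, z ∉ V →
      u * z ∈ U ∧ u * z ∉ V ∧ z * u ∈ U ∧ z * u ∉ V := by
  intro t U V
  have hV : ∀ x ∈ Set.range (fun h : H => Coprod.inl h) ∪
      {x | ∃ h : H, x = t * Coprod.inl h * t⁻¹}, exponentSum x = 1 := by
    rintro _ (⟨h, rfl⟩ | ⟨h, rfl⟩)
    · exact exponentSum_inl h
    · simp only [map_mul, map_inv, exponentSum_inl, mul_one, mul_inv_cancel]
  have ht : ∀ x ∈ ({t} : Set _), 1 < exponentSum x := by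
    rintro _ rfl
    rw [exponentSum_inr_of, ← ofAdd_zero, Multiplicative.ofAdd_lt]
    exact one_pos
  simpa only [U, V, Set.union_assoc] using
    complement_is_ideal_general hV ht (Set.singleton_nonempty t)
end

section
/- Let H be a group and let W be a finite subset of H. Let T = ⟨W⟩ be the submonoid of H generated by W, and let S = ⟨{t} ∪ H ∪ tWt⁻¹⟩ be the submonoid of the free product H ∗ FG(t) generated by {t} ∪ H ∪ {t * w * t⁻¹ | w ∈ W}. Then for all h ∈ H: t * h * t⁻¹ ∈ S if and only if h ∈ T. -/
open Monoid

/-! Let `t` act on `H × ℤ` by raising the level `n` of `(x, n)` by one when `x ∈ T`, and let `H`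
act by left multiplication on the first coordinate. Then `t` and `H` preserve the set of points of
positive level, while `t h t⁻¹` preserves it exactly when `h T ⊆ T`: over `T`, `t⁻¹` lowers level
`1` to level `0`, and `t` undoes this only if `h` has kept the point over `T`. Hence all of `S`
preserves positive levels, and `t h t⁻¹ ∈ S` forces `h = h 1 ∈ T`. -/

section LevelShift

open Set

variable {X : Type*}

/-- The submonoid of self-maps of `X` that preserve the subset `s`, in the sense `f '' s ⊆ s`. -/
def mapsToSubmonoid (s : Set X) : Submonoid (Function.End X) where
  carrier := {f | MapsTo f s s}
  one_mem' := mapsTo_id s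
  mul_mem' hf hg := hf.comp hg

lemma mem_mapsToSubmonoid {s : Set X} {f : Function.End X} :
    f ∈ mapsToSubmonoid s ↔ MapsTo f s s :=
  Iff.rfl

/-- The points of `X × ℤ` of positive level, the level being the second coordinate. -/
def positiveLevels (X : Type*) : Set (X × ℤ) := {p | 0 < p.2}

open Classical in
/-- The permutation of `X × ℤ` that raises the level by one over `s` and is the identity elsewhere;
this is how the stable letter `t` acts. -/
noncomputable def levelShift (s : Set X) : Equiv.Perm (X × ℤ) :=
  (Equiv.refl X).prodShear fun x ↦ if x ∈ s then Equiv.addRight 1 else Equiv.refl ℤ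

variable {s : Set X} {x : X}

lemma levelShift_apply_of_mem (hx : x ∈ s) (n : ℤ) : levelShift s (x, n) = (x, n + 1) := by
  simp [levelShift, hx]

lemma levelShift_apply_of_notMem (hx : x ∉ s) (n : ℤ) : levelShift s (x, n) = (x, n) := by
  simp [levelShift, hx]

lemma levelShift_symm_apply_of_mem (hx : x ∈ s) (n : ℤ) :
    (levelShift s).symm (x, n) = (x, n - 1) := by
  simp [Equiv.symm_apply_eq, levelShift_apply_of_mem hx]

lemma levelShift_symm_apply_of_notMem (hx : x ∉ s) (n : ℤ) :
    (levelShift s).symm (x, n) = (x, n) := by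
  simp [Equiv.symm_apply_eq, levelShift_apply_of_notMem hx]

lemma snd_le_levelShift_snd (s : Set X) (p : X × ℤ) : p.2 ≤ (levelShift s p).2 := by
  obtain ⟨x, n⟩ := p
  by_cases hx : x ∈ s
  · simp [levelShift_apply_of_mem hx]
  · simp [levelShift_apply_of_notMem hx]

lemma mapsTo_levelShift_positiveLevels (s : Set X) :
    MapsTo (levelShift s) (positiveLevels X) (positiveLevels X) :=
  fun p hp ↦ lt_of_lt_of_le hp (snd_le_levelShift_snd s p)

lemma mapsTo_levelShift_conj_positiveLevels_iff {f : X → X} :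
    MapsTo (levelShift s ∘ Prod.map f id ∘ (levelShift s).symm)
      (positiveLevels X) (positiveLevels X) ↔ MapsTo f s s := by
  constructor
  · intro h x hx
    by_contra hfx
    have level_pos := h (show (x, 1) ∈ positiveLevels X from one_pos (α := ℤ))
    simp [positiveLevels, levelShift_symm_apply_of_mem hx, levelShift_apply_of_notMem hfx]
      at level_pos
  · rintro hf ⟨x, n⟩ hn
    by_cases hx : x ∈ s
    · simpa [positiveLevels, levelShift_symm_apply_of_mem hx, levelShift_apply_of_mem (hf hx)]
        using hn
    · simpa [levelShift_symm_apply_of_notMem hx]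
        using mapsTo_levelShift_positiveLevels s (show (f x, n) ∈ positiveLevels X from hn)

end LevelShift

section FreeProduct

open Set

variable {M α X : Type*} [Monoid M]

/-- The homomorphism `m ↦ t m t⁻¹` into the free product of `M` and a free group, where `t` is the
free generator `a`. As `M` is only a monoid, `t⁻¹` is formed in the free group. -/
def conjInl (a : α) : M →* Coprod M (FreeGroup α) where
  toFun m := Coprod.inr (FreeGroup.of a) * Coprod.inl m * Coprod.inr (FreeGroup.of a)⁻¹
  map_one' := by simp [← map_mul]
  map_mul' m n := by
    have cancel : Coprod.inr (FreeGroup.of a)⁻¹ * Coprod.inr (FreeGroup.of a) =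
        (1 : Coprod M (FreeGroup α)) := by simp [← map_mul]
    simp only [map_mul, mul_assoc]
    rw [← mul_assoc (Coprod.inr (FreeGroup.of a)⁻¹), cancel, one_mul]

lemma conjInl_apply (a : α) (m : M) :
    conjInl a m =
      Coprod.inr (FreeGroup.of a) * Coprod.inl m * Coprod.inr (FreeGroup.of a)⁻¹ :=
  rfl

/-- The submonoid `⟨{t} ∪ M ∪ t W t⁻¹⟩` of the free product of `M` and a free group, where `t` is
the free generator `a`. -/
def conjSubmonoid (a : α) (W : Set M) : Submonoid (Coprod M (FreeGroup α)) :=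
  Submonoid.closure ({Coprod.inr (FreeGroup.of a)} ∪ range Coprod.inl ∪ conjInl a '' W)

lemma conjInl_mem_conjSubmonoid (a : α) {W : Set M} {m : M} (hm : m ∈ Submonoid.closure W) :
    conjInl a m ∈ conjSubmonoid a W := by
  have closure_le : Submonoid.closure W ≤ (conjSubmonoid a W).comap (conjInl a) :=
    Submonoid.closure_le.2 fun w hw ↦ Submonoid.subset_closure (Or.inr (mem_image_of_mem _ hw))
  exact closure_le hm

variable [MulAction M X]

/-- The action of the free product on `X × ℤ` in which `M` acts on the first coordinate and the free
generators act by `levelShift s`. -/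
noncomputable def levelAction (s : Set X) :
    Coprod M (FreeGroup α) →* Function.End (X × ℤ) :=
  Coprod.lift
    { toFun m := Prod.map (m • ·) id
      map_one' := funext fun p ↦ Prod.ext (one_smul M p.1) rfl
      map_mul' m n := funext fun p ↦ Prod.ext (mul_smul m n p.1) rfl }
    (MulAction.toEndHom.comp (FreeGroup.lift fun _ ↦ levelShift s))

lemma levelAction_inl (s : Set X) (m : M) :
    levelAction (α := α) s (Coprod.inl m) = Prod.map (m • ·) id :=
  Coprod.lift_apply_inl _ _ m

lemma levelAction_inr (s : Set X) (g : FreeGroup α) :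
    levelAction (M := M) s (Coprod.inr g) = ⇑(FreeGroup.lift (fun _ ↦ levelShift s) g) :=
  Coprod.lift_apply_inr _ _ g

lemma levelAction_inr_of (s : Set X) (a : α) :
    levelAction (M := M) s (Coprod.inr (FreeGroup.of a)) = ⇑(levelShift s) := by
  rw [levelAction_inr, FreeGroup.lift_apply_of]

lemma levelAction_inr_of_inv (s : Set X) (a : α) :
    levelAction (M := M) s (Coprod.inr (FreeGroup.of a)⁻¹) = ⇑(levelShift s).symm := by
  rw [levelAction_inr, map_inv, FreeGroup.lift_apply_of, Equiv.Perm.inv_def]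

lemma levelAction_conjInl (s : Set X) (a : α) (m : M) :
    levelAction s (conjInl a m) = levelShift s ∘ Prod.map (m • ·) id ∘ (levelShift s).symm := by
  rw [conjInl_apply, map_mul, map_mul, levelAction_inr_of, levelAction_inl, levelAction_inr_of_inv]
  rfl

lemma conjSubmonoid_le_comap_mapsToSubmonoid (a : α) {W : Set M} {s : Set X}
    (hW : ∀ w ∈ W, MapsTo (w • ·) s s) :
    conjSubmonoid a W ≤ (mapsToSubmonoid (positiveLevels X)).comap (levelAction s) := by
  refine Submonoid.closure_le.2 ?_
  rintro _ ((rfl | ⟨m, rfl⟩) | ⟨w, hw, rfl⟩) <;>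
    rw [SetLike.mem_coe, Submonoid.mem_comap, mem_mapsToSubmonoid]
  · rw [levelAction_inr_of]
    exact mapsTo_levelShift_positiveLevels s
  · rw [levelAction_inl]
    exact fun _ hp ↦ hp
  · rw [levelAction_conjInl]
    exact mapsTo_levelShift_conj_positiveLevels_iff.2 (hW w hw)

lemma mapsTo_smul_of_conjInl_mem_conjSubmonoid {a : α} {W : Set M} {s : Set X} {m : M}
    (hW : ∀ w ∈ W, MapsTo (w • ·) s s) (hm : conjInl a m ∈ conjSubmonoid a W) :
    MapsTo (m • ·) s s := by
  have preserves := conjSubmonoid_le_comap_mapsToSubmonoid a hW hm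
  rw [Submonoid.mem_comap, mem_mapsToSubmonoid, levelAction_conjInl] at preserves
  exact mapsTo_levelShift_conj_positiveLevels_iff.1 preserves

theorem conj_mem_iff_mem_general (a : α) (W : Set M) (m : M) :
    conjInl a m ∈ conjSubmonoid a W ↔ m ∈ Submonoid.closure W := by
  refine ⟨fun hm ↦ ?_, conjInl_mem_conjSubmonoid a⟩
  have mapsTo_closure : MapsTo (m • ·) (Submonoid.closure W : Set M) (Submonoid.closure W) :=
    mapsTo_smul_of_conjInl_mem_conjSubmonoid
      (fun _ hw _ ↦ mul_mem (Submonoid.subset_closure hw)) hm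
  simpa using mapsTo_closure (one_mem (Submonoid.closure W))

end FreeProduct

/-- Let `H` be a group, `W ⊆ H` finite, `T = ⟨W⟩ ≤ H` and let `S` be the submonoid of the free
product `H ∗ FG(t)` generated by `{t} ∪ H ∪ tWt⁻¹`.  Then for all `h ∈ H`:
`t h t⁻¹ ∈ S ↔ h ∈ T`. -/
theorem conj_mem_iff_mem (H : Type) [Group H] (W : Finset H) :
    let t : Coprod H (FreeGroup Unit) := Coprod.inr (FreeGroup.of ())
    let T : Submonoid H := Submonoid.closure (W : Set H)
    let S : Submonoid (Coprod H (FreeGroup Unit)) :=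
      Submonoid.closure
        ({t} ∪ Set.range (fun h : H => Coprod.inl h) ∪
          {x | ∃ w ∈ W, x = t * Coprod.inl w * t⁻¹})
    ∀ h : H, t * Coprod.inl h * t⁻¹ ∈ S ↔ h ∈ T := by
  intro t T S h
  simpa [t, T, S, conjInl_apply, conjSubmonoid, Set.image, eq_comm]
    using conj_mem_iff_mem_general () (W : Set H) h
end

section
/- Let B be a type and let σ be any monoid congruence on FreeMonoid (B × Bool) containing the Vagner congruence ν. If u, v ∈ FreeMonoid (B × Bool) are words such that u * v is right invertible modulo σ, then σ relates u * v * v⁻¹ to u. -/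
/-- The formal inverse of a word over `B`: reverse the word and negate the `Bool` component
of each letter. -/
def wInv {B : Type*} (w : FreeMonoid (B × Bool)) : FreeMonoid (B × Bool) :=
  FreeMonoid.ofList (((FreeMonoid.toList w).map fun p => (p.1, !p.2)).reverse)

/-- The generating relation of the Vagner congruence: `w w⁻¹ w ~ w` and
`w w⁻¹ u u⁻¹ ~ u u⁻¹ w w⁻¹` for all words `u, w`. -/
def vagnerRel (B : Type*) : FreeMonoid (B × Bool) → FreeMonoid (B × Bool) → Prop :=
  fun x y =>
    (∃ w, x = w * wInv w * w ∧ y = w) ∨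
    (∃ u w, x = w * wInv w * (u * wInv u) ∧ y = u * wInv u * (w * wInv w))

/-- The Vagner congruence on `FreeMonoid (B × Bool)`. -/
def vagnerCon (B : Type*) : Con (FreeMonoid (B × Bool)) := conGen (vagnerRel B)

/-! Modulo `σ`, the words `u⁻¹u` and `vv⁻¹` are commuting idempotents, and right invertibility of
`uv` upgrades `uv(uv)⁻¹uv = uv` to `uvv⁻¹u⁻¹ = 1`. Hence
`uvv⁻¹ = u(u⁻¹u)(vv⁻¹) = u(vv⁻¹)(u⁻¹u) = (uvv⁻¹u⁻¹)u = u`. -/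

theorem wInv_mul {B : Type*} (u v : FreeMonoid (B × Bool)) :
    wInv (u * v) = wInv v * wInv u := by
  simp only [wInv, FreeMonoid.toList_mul, List.map_append, List.reverse_append,
    FreeMonoid.ofList_append]

theorem wInv_wInv {B : Type*} (w : FreeMonoid (B × Bool)) : wInv (wInv w) = w := by
  apply FreeMonoid.toList.injective
  simp [wInv, Function.comp_def]

theorem vagnerCon_mul_wInv_mul_self {B : Type*} (w : FreeMonoid (B × Bool)) :
    vagnerCon B (w * wInv w * w) w :=
  ConGen.Rel.of _ _ (Or.inl ⟨w, rfl, rfl⟩)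

theorem vagnerCon_mul_wInv_comm {B : Type*} (u w : FreeMonoid (B × Bool)) :
    vagnerCon B (u * wInv u * (w * wInv w)) (w * wInv w * (u * wInv u)) :=
  ConGen.Rel.of _ _ (Or.inr ⟨w, u, rfl, rfl⟩)

theorem vagnerCon_wInv_mul_comm_mul_wInv {B : Type*} (u v : FreeMonoid (B × Bool)) :
    vagnerCon B (wInv u * u * (v * wInv v)) (v * wInv v * (wInv u * u)) := by
  simpa only [wInv_wInv] using vagnerCon_mul_wInv_comm (wInv u) v

section Monoid

variable {M : Type*} [Monoid M] {a a' b b' c : M}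

theorem mul_eq_one_of_mul_mul_self_of_mul_eq_one (ha : a * a' * a = a) (hac : a * c = 1) :
    a * a' = 1 :=
  (isRightRegular_of_mul_eq_one hac).mul_right_eq_self_iff.1 ha

theorem mul_mul_eq_self_of_commute_of_mul_eq_one (ha : a * a' * a = a)
    (hcomm : Commute (a' * a) (b * b')) (hab : a * b * (b' * a') = 1) :
    a * b * b' = a :=
  calc a * b * b' = a * a' * a * b * b' := by rw [ha]
    _ = a * (a' * a * (b * b')) := by simp only [mul_assoc]
    _ = a * (b * b' * (a' * a)) := by rw [hcomm.eq]
    _ = a * b * (b' * a') * a := by simp only [mul_assoc]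
    _ = a := by rw [hab, one_mul]

end Monoid

/-- For any congruence `σ` containing the Vagner congruence: if `u * v` is right invertible
modulo `σ`, then `σ` relates `u * v * v⁻¹` to `u`. -/
theorem rightInvertible_mul_inv_cancel {B : Type*} (σ : Con (FreeMonoid (B × Bool)))
    (hσ : vagnerCon B ≤ σ) (u v : FreeMonoid (B × Bool))
    (h : ∃ z, σ (u * v * z) 1) :
    σ (u * v * wInv v) u := by
  obtain ⟨z, hz⟩ := h
  have regular (w : FreeMonoid (B × Bool)) : (w * wInv w * w : σ.Quotient) = w :=
    σ.eq.2 (hσ (vagnerCon_mul_wInv_mul_self w))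
  have comm : Commute (wInv u * u : σ.Quotient) (v * wInv v) :=
    σ.eq.2 (hσ (vagnerCon_wInv_mul_comm_mul_wInv u v))
  have uv_mul_z : ((u * v : FreeMonoid (B × Bool)) * z : σ.Quotient) = 1 := σ.eq.2 hz
  have uv_mul_inv : (u * v * (wInv v * wInv u) : σ.Quotient) = 1 := by
    simpa only [wInv_mul, Con.coe_mul] using
      mul_eq_one_of_mul_mul_self_of_mul_eq_one (regular (u * v)) uv_mul_z
  exact σ.eq.1 (mul_mul_eq_self_of_commute_of_mul_eq_one (regular u) comm uv_mul_inv)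
end

section
/- With the construction setup fixed (alphabet B = Fin n ⊕ Unit, idempotent word e, inverse monoid M = Inv⟨B | e·r₁ = 1, r₂ = 1, …, r_m = 1⟩ with defining congruence σ), the inverse monoid M is E-unitary: for every word u ∈ FreeMonoid (B × Bool), if the image of FreeGroup.mk u in the maximal group image K = PresentedGroup {FreeGroup.mk (e*r₁), FreeGroup.mk r₂, …, FreeGroup.mk r_m} (over FreeGroup B) is the identity — equivalently, FreeGroup.mk u lies in the normal closure of the relators — then σ relates u * u to u (the class of u in M is idempotent). -/
/-- The alphabet `B = Fin n ⊕ Unit`, the generators `a₁, …, a_n` together with the extra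
generator `t`. -/
abbrev B (n : ℕ) : Type := Fin n ⊕ Unit

/-- Embedding of words over `Fin n` as words over `B n`. -/
def emb {n : ℕ} : FreeMonoid (Fin n × Bool) →* FreeMonoid (B n × Bool) :=
  FreeMonoid.map (fun p => (Sum.inl p.1, p.2))

/-- The one-letter word `t`. -/
def tW (n : ℕ) : FreeMonoid (B n × Bool) := FreeMonoid.of (Sum.inr (), true)

/-- The one-letter word `t⁻¹`. -/
def tWinv (n : ℕ) : FreeMonoid (B n × Bool) := FreeMonoid.of (Sum.inr (), false)

/-- The one-letter word `aᵢ`. -/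
def aW {n : ℕ} (i : Fin n) : FreeMonoid (B n × Bool) := FreeMonoid.of (Sum.inl i, true)

/-- `u ↦ u u⁻¹`. -/
def idem {β : Type*} (u : FreeMonoid (β × Bool)) : FreeMonoid (β × Bool) := u * wInv u

/-- The idempotent word
`e(a₁, …, a_n, t w₁ t⁻¹, …, t w_k t⁻¹, a₁⁻¹, …, a_n⁻¹)`, where `e(u₁, …, u_l)` denotes
`u₁ u₁⁻¹ ⋯ u_l u_l⁻¹`. -/
def eWord {n k : ℕ} (w : Fin k → FreeMonoid (Fin n × Bool)) : FreeMonoid (B n × Bool) :=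
  ((List.ofFn fun i : Fin n => idem (aW i)) ++
    (List.ofFn fun j : Fin k => idem (tW n * emb (w j) * tWinv n)) ++
    (List.ofFn fun i : Fin n => idem (wInv (aW i)))).prod

/-- The congruence `σ` defining the inverse monoid
`M = Inv⟨B | e·r₁ = 1, r₂ = 1, …, r_m = 1⟩`: it is generated by the Vagner congruence
together with the pairs `(e·r₁, 1)` and `(rᵢ, 1)` for `i ≠ 1`. -/
def invCon {n m k : ℕ} (hm : 0 < m) (r : Fin m → FreeMonoid (Fin n × Bool))
    (w : Fin k → FreeMonoid (Fin n × Bool)) : Con (FreeMonoid (B n × Bool)) :=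
  conGen (fun x y => vagnerRel (B n) x y ∨
    (x = eWord w * emb (r ⟨0, hm⟩) ∧ y = 1) ∨
    (∃ i : Fin m, i ≠ ⟨0, hm⟩ ∧ x = emb (r i) ∧ y = 1))

/-- The set of relators of the maximal group image
`K = Gp⟨B | e·r₁ = 1, r₂ = 1, …, r_m = 1⟩`, as elements of `FreeGroup (B n)`. -/
def relsK {n m k : ℕ} (hm : 0 < m) (r : Fin m → FreeMonoid (Fin n × Bool))
    (w : Fin k → FreeMonoid (Fin n × Bool)) : Set (FreeGroup (B n)) :=
  insert (FreeGroup.mk (FreeMonoid.toList (eWord w * emb (r ⟨0, hm⟩))))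
    {x | ∃ i : Fin m, i ≠ ⟨0, hm⟩ ∧ x = FreeGroup.mk (FreeMonoid.toList (emb (r i)))}

/-- The set of relators of the group `G = Gp⟨Fin n | r₁ = 1, …, r_m = 1⟩`. -/
def relsG {n m : ℕ} (r : Fin m → FreeMonoid (Fin n × Bool)) : Set (FreeGroup (Fin n)) :=
  {x | ∃ i : Fin m, x = FreeGroup.mk (FreeMonoid.toList (r i))}

/-- The canonical evaluation map of words over `Fin n` in the group `G`. -/
def piG {n m : ℕ} (r : Fin m → FreeMonoid (Fin n × Bool)) (u : FreeMonoid (Fin n × Bool)) :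
    PresentedGroup (relsG r) :=
  PresentedGroup.mk (relsG r) (FreeGroup.mk (FreeMonoid.toList u))

/-- The submonoid `T` of `G` generated by the images of `w₁, …, w_k`. -/
def subT {n m k : ℕ} (r : Fin m → FreeMonoid (Fin n × Bool))
    (w : Fin k → FreeMonoid (Fin n × Bool)) : Submonoid (PresentedGroup (relsG r)) :=
  Submonoid.closure (Set.range fun j : Fin k => piG r (w j))

/-!
Since `e` is a product of idempotents, `e * r₁ = 1` forces every factor of `e` to be `1` in `M`;
hence the `aᵢ` are units and `r₁ = 1`. Thus `G = Gp⟨a₁, …, a_n | r₁, …, r_m⟩` maps to the units of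
`M`, and `K` maps to the free product `G ∗ ⟨t⟩`. Evaluating normal forms of `G ∗ ⟨t⟩` in `M` is
submultiplicative for the natural partial order, because reducing a word only replaces some
`t * t⁻¹` or `t⁻¹ * t` by the larger element `1`. So every word lies below the normal form of its
group image. A word with trivial image in `K` therefore lies below `1`, which is to say that it is
idempotent.
-/

open Monoid
open scoped Coprod

/-- A monoid is inverse if it is von Neumann regular and its idempotents commute; equivalently,
every element `x` has a unique `y` with `x * y * x = x` and `y * x * y = y`. -/
class IsInverseMonoid (M : Type*) [Monoid M] : Prop where
  exists_mul_mul_eq (x : M) : ∃ y, x * y * x = x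
  commute_of_isIdempotentElem {e f : M} :
    IsIdempotentElem e → IsIdempotentElem f → Commute e f

/-- The natural partial order `x ≤ y` of an inverse monoid. -/
def NaturalLE {M : Type*} [Monoid M] (x y : M) : Prop :=
  ∃ e, IsIdempotentElem e ∧ x = e * y

local infix:50 "≼" => NaturalLE

section NaturalOrder

variable {M : Type*} [Monoid M] {x y z : M}

theorem NaturalLE.refl (x : M) : x ≼ x :=
  ⟨1, .one, (one_mul x).symm⟩

theorem NaturalLE.of_eq (h : x = y) : x ≼ y :=
  h ▸ .refl x

theorem naturalLE_one_iff : x ≼ 1 ↔ IsIdempotentElem x := by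
  simp [NaturalLE]

theorem NaturalLE.mul_right (h : x ≼ y) (z : M) : x * z ≼ y * z := by
  obtain ⟨e, he, rfl⟩ := h
  exact ⟨e, he, mul_assoc e y z⟩

variable [IsInverseMonoid M]

theorem NaturalLE.trans (hxy : x ≼ y) (hyz : y ≼ z) : x ≼ z := by
  obtain ⟨e, he, rfl⟩ := hxy
  obtain ⟨f, hf, rfl⟩ := hyz
  exact ⟨e * f, .mul_of_commute (IsInverseMonoid.commute_of_isIdempotentElem he hf) he hf,
    (mul_assoc e f z).symm⟩

instance : Trans (NaturalLE (M := M)) NaturalLE NaturalLE := ⟨NaturalLE.trans⟩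

theorem NaturalLE.mul_left (h : x ≼ y) (z : M) : z * x ≼ z * y := by
  obtain ⟨e, he, rfl⟩ := h
  obtain ⟨z', hz⟩ := IsInverseMonoid.exists_mul_mul_eq z
  have hz' : IsIdempotentElem (z' * z) := by
    rw [IsIdempotentElem, mul_assoc, ← mul_assoc z, hz]
  have hcomm : z' * z * e = e * (z' * z) :=
    IsInverseMonoid.commute_of_isIdempotentElem hz' he
  refine ⟨z * e * z', ?_, ?_⟩
  · calc z * e * z' * (z * e * z') = z * (e * (z' * z)) * e * z' := by simp only [mul_assoc]
      _ = z * z' * z * (e * e) * z' := by rw [← hcomm]; simp only [mul_assoc]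
      _ = z * e * z' := by rw [hz, he.eq]
  · calc z * (e * y) = z * z' * z * e * y := by rw [hz, mul_assoc]
      _ = z * (z' * z * e) * y := by simp only [mul_assoc]
      _ = z * e * z' * (z * y) := by rw [hcomm]; simp only [mul_assoc]

theorem NaturalLE.mul {x' y' : M} (h : x ≼ y) (h' : x' ≼ y') : x * x' ≼ y * y' :=
  (h.mul_right x').trans (h'.mul_left y)

end NaturalOrder

/-- A unital dual prehomomorphism, i.e. a map that is submultiplicative for the natural partial
order of an inverse monoid. Compatibility with inverses is not imposed. -/
structure IsDualPrehom {H M : Type*} [Monoid H] [Monoid M] (φ : H → M) : Prop where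
  map_one : φ 1 = 1
  map_mul_le (g h : H) : φ g * φ h ≼ φ (g * h)

section DualPrehom

variable {H M : Type*} [Monoid H] [Monoid M] {φ : H → M}

theorem isDualPrehom_coe_units (ρ : H →* Mˣ) : IsDualPrehom fun h => (ρ h : M) where
  map_one := by simp
  map_mul_le g h := .of_eq (by simp)

theorem IsDualPrehom.comp_monoidHom {H' : Type*} [Monoid H'] (hφ : IsDualPrehom φ) (θ : H' →* H) :
    IsDualPrehom fun h => φ (θ h) where
  map_one := by simp [hφ.map_one]
  map_mul_le g h := by simpa only [map_mul] using hφ.map_mul_le (θ g) (θ h)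

theorem IsDualPrehom.naturalLE_of_letters {A : Type*} [IsInverseMonoid M] (hφ : IsDualPrehom φ)
    {π : FreeMonoid A →* M} {θ : FreeMonoid A →* H}
    (hletter : ∀ a, π (.of a) ≼ φ (θ (.of a))) (u : FreeMonoid A) : π u ≼ φ (θ u) := by
  induction u using FreeMonoid.inductionOn' with
  | one => exact .of_eq (by rw [_root_.map_one, _root_.map_one, hφ.map_one])
  | of_mul a u ih =>
    calc π (.of a * u) = π (.of a) * π u := map_mul π _ _
      _ ≼ φ (θ (.of a)) * φ (θ u) := (hletter a).mul ih
      _ ≼ φ (θ (.of a) * θ u) := hφ.map_mul_le _ _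
      _ = φ (θ (.of a * u)) := by rw [map_mul]

end DualPrehom

section FreeGroup

variable {τ M : Type*} [Monoid M] [IsInverseMonoid M] {f : τ × Bool → M}

theorem prod_map_naturalLE_of_red
    (hf : ∀ x b, IsIdempotentElem (f (x, b) * f (x, !b))) {L L' : List (τ × Bool)}
    (h : FreeGroup.Red L L') : (L.map f).prod ≼ (L'.map f).prod := by
  induction h with
  | refl => exact .refl _
  | tail _ hstep ih =>
    obtain @⟨L₁, L₂, x, b⟩ := hstep
    refine ih.trans ?_
    have hcancel := ((naturalLE_one_iff.2 (hf x b)).mul_right (L₂.map f).prod).mul_left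
      (L₁.map f).prod
    simpa [mul_assoc] using hcancel

theorem exists_isDualPrehom_freeGroup
    (hf : ∀ x b, IsIdempotentElem (f (x, b) * f (x, !b))) :
    ∃ φ : FreeGroup τ → M, IsDualPrehom φ ∧ ∀ p, φ (FreeGroup.mk [p]) = f p := by
  classical
  refine ⟨fun g => (g.toWord.map f).prod, ⟨by simp, fun g h => ?_⟩, fun p => ?_⟩
  · rw [← List.prod_append, ← List.map_append, FreeGroup.toWord_mul]
    exact prod_map_naturalLE_of_red hf FreeGroup.reduce.red
  · simp [FreeGroup.toWord_mk]

end FreeGroup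

section FreeProduct

variable {M ι : Type*} [Monoid M] {G : ι → Type*} [∀ i, Monoid (G i)]

/-- The value in `M` of a normal form of a free product, given a map to `M` on every factor. -/
def wordEval (φ : ∀ i, G i → M) (x : CoprodI.Word G) : M :=
  (x.toList.map fun p => φ p.1 p.2).prod

theorem wordEval_empty (φ : ∀ i, G i → M) : wordEval φ .empty = 1 :=
  rfl

section WordEval

variable [∀ i, DecidableEq (G i)] {φ : ∀ i, G i → M}

theorem wordEval_rcons (hφ : ∀ i, φ i 1 = 1) {i : ι} (p : CoprodI.Word.Pair G i) :
    wordEval φ (CoprodI.Word.rcons p) = φ i p.head * wordEval φ p.tail := by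
  unfold CoprodI.Word.rcons
  split_ifs with h
  · rw [h, hφ, one_mul]
  · simp [wordEval, CoprodI.Word.cons]

variable [DecidableEq ι]

theorem mul_wordEval_naturalLE (hφ : ∀ i, IsDualPrehom (φ i)) {i : ι} (g : G i)
    (x : CoprodI.Word G) : φ i g * wordEval φ x ≼ wordEval φ (CoprodI.of g • x) := by
  set p := CoprodI.Word.equivPair i x
  have hx : x = CoprodI.Word.rcons p := by
    rw [← CoprodI.Word.equivPair_symm, Equiv.symm_apply_apply]
  have hone := fun j => (hφ j).map_one
  calc φ i g * wordEval φ x = φ i g * φ i p.head * wordEval φ p.tail := by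
        rw [hx, wordEval_rcons hone, mul_assoc]
    _ ≼ φ i (g * p.head) * wordEval φ p.tail := ((hφ i).map_mul_le g p.head).mul_right _
    _ = wordEval φ (CoprodI.of g • x) := by
        rw [CoprodI.Word.of_smul_def, wordEval_rcons hone]

theorem wordEval_mul_naturalLE [IsInverseMonoid M] (hφ : ∀ i, IsDualPrehom (φ i))
    (x y : CoprodI.Word G) : wordEval φ x * wordEval φ y ≼ wordEval φ (x.prod • y) := by
  induction x using CoprodI.Word.consRecOn with
  | empty => exact .of_eq (by rw [CoprodI.Word.prod_empty, one_smul, wordEval_empty, one_mul])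
  | cons i g x hidx hne ih =>
    calc wordEval φ (.cons g x hidx hne) * wordEval φ y
        = φ i g * (wordEval φ x * wordEval φ y) := by
          simp [wordEval, CoprodI.Word.cons, mul_assoc]
      _ ≼ φ i g * wordEval φ (x.prod • y) := ih.mul_left _
      _ ≼ wordEval φ (CoprodI.of g • x.prod • y) := mul_wordEval_naturalLE hφ g _
      _ = wordEval φ ((CoprodI.Word.cons g x hidx hne).prod • y) := by
          rw [CoprodI.Word.prod_cons, mul_smul]

end WordEval

variable [IsInverseMonoid M]

theorem exists_isDualPrehom_coprodI {φ : ∀ i, G i → M} (hφ : ∀ i, IsDualPrehom (φ i)) :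
    ∃ ψ : CoprodI G → M, IsDualPrehom ψ ∧ ∀ i g, φ i g ≼ ψ (CoprodI.of g) := by
  classical
  refine ⟨fun g => wordEval φ (g • .empty), ⟨by rw [one_smul, wordEval_empty], fun g h => ?_⟩,
    fun i g => ?_⟩
  · have hprod : (g • CoprodI.Word.empty : CoprodI.Word G).prod = g := by
      rw [CoprodI.Word.prod_smul, CoprodI.Word.prod_empty, mul_one]
    simpa only [hprod, mul_smul] using
      wordEval_mul_naturalLE hφ (g • .empty) (h • .empty)
  · simpa only [wordEval_empty, mul_one] using mul_wordEval_naturalLE hφ g .empty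

theorem exists_isDualPrehom_coprod {G₁ G₂ : Type*} [Monoid G₁] [Monoid G₂] {φ₁ : G₁ → M}
    {φ₂ : G₂ → M} (hφ₁ : IsDualPrehom φ₁) (hφ₂ : IsDualPrehom φ₂) :
    ∃ ψ : G₁ ∗ G₂ → M, IsDualPrehom ψ ∧
      (∀ g, φ₁ g ≼ ψ (Coprod.inl g)) ∧ ∀ g, φ₂ g ≼ ψ (Coprod.inr g) := by
  -- Both factors are enlarged to `G₁ × G₂`, so that the indexed family has a constant type.
  let φ : Bool → G₁ × G₂ → M := fun i g => cond i (φ₁ g.1) (φ₂ g.2)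
  have hφ : ∀ i, IsDualPrehom (φ i)
    | true => hφ₁.comp_monoidHom (.fst G₁ G₂)
    | false => hφ₂.comp_monoidHom (.snd G₁ G₂)
  obtain ⟨ψ, hψ, hle⟩ := exists_isDualPrehom_coprodI hφ
  let θ : G₁ ∗ G₂ →* CoprodI fun _ : Bool => G₁ × G₂ :=
    Coprod.lift ((CoprodI.of (i := true)).comp (.inl G₁ G₂))
      ((CoprodI.of (i := false)).comp (.inr G₁ G₂))
  refine ⟨fun g => ψ (θ g), hψ.comp_monoidHom θ, fun g => ?_, fun g => ?_⟩
  · simpa [θ, φ] using hle true (g, 1)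
  · simpa [θ, φ] using hle false (1, g)

end FreeProduct

/-- The element of the free group spelled by a word, as a monoid homomorphism. -/
def toFreeGroup {β : Type*} : FreeMonoid (β × Bool) →* FreeGroup β where
  toFun u := FreeGroup.mk u.toList
  map_one' := rfl
  map_mul' _ _ := FreeGroup.mul_mk.symm

section Unitary

variable {α τ G : Type*} [Group G]

/-- The homomorphism `F(α ⊕ τ) → G ∗ F(τ)` extending `γ : F(α) → G` by the identity on `F(τ)`. -/
def extendByFree (γ : FreeGroup α →* G) : FreeGroup (α ⊕ τ) →* G ∗ FreeGroup τ :=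
  FreeGroup.lift (Sum.elim (fun i => Coprod.inl (γ (.of i))) fun x => Coprod.inr (.of x))

theorem extendByFree_map_inl (γ : FreeGroup α →* G) (g : FreeGroup α) :
    extendByFree γ (FreeGroup.map (Sum.inl : α → α ⊕ τ) g) = Coprod.inl (γ g) := by
  have h : (extendByFree γ).comp (FreeGroup.map (Sum.inl : α → α ⊕ τ)) = Coprod.inl.comp γ := by
    ext i
    simp [extendByFree]
  exact DFunLike.congr_fun h g

theorem extendByFree_map_inr (γ : FreeGroup α →* G) (g : FreeGroup τ) :
    extendByFree γ (FreeGroup.map (Sum.inr : τ → α ⊕ τ) g) = Coprod.inr g := by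
  have h : (extendByFree γ).comp (FreeGroup.map (Sum.inr : τ → α ⊕ τ)) = Coprod.inr := by
    ext x
    simp [extendByFree]
  exact DFunLike.congr_fun h g

theorem isIdempotentElem_of_extendByFree_eq_one {M : Type*} [Monoid M] [IsInverseMonoid M]
    {γ : FreeGroup α →* G} (ρ : G →* Mˣ) {π : FreeMonoid ((α ⊕ τ) × Bool) →* M}
    (hunit : ∀ i b, π (.of (.inl i, b)) = ρ (γ (FreeGroup.mk [(i, b)])))
    (hidem : ∀ x b, IsIdempotentElem (π (.of (.inr x, b)) * π (.of (.inr x, !b))))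
    {u : FreeMonoid ((α ⊕ τ) × Bool)} (hu : extendByFree γ (toFreeGroup u) = 1) :
    IsIdempotentElem (π u) := by
  obtain ⟨φ, hφ, hφτ⟩ :=
    exists_isDualPrehom_freeGroup (f := fun p : τ × Bool => π (.of (.inr p.1, p.2))) hidem
  obtain ⟨ψ, hψ, hinl, hinr⟩ := exists_isDualPrehom_coprod (isDualPrehom_coe_units ρ) hφ
  have hletter : ∀ p, π (.of p) ≼ ψ ((extendByFree γ).comp toFreeGroup (.of p))
    | (.inl i, b) => by
      have hθ : (extendByFree (τ := τ) γ).comp toFreeGroup (.of (.inl i, b)) =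
          Coprod.inl (γ (FreeGroup.mk [(i, b)])) :=
        extendByFree_map_inl γ (FreeGroup.mk [(i, b)])
      rw [hθ, hunit]
      exact hinl _
    | (.inr x, b) => by
      have hθ : (extendByFree (τ := τ) γ).comp toFreeGroup (.of (.inr x, b)) =
          Coprod.inr (FreeGroup.mk [(x, b)]) :=
        extendByFree_map_inr γ (FreeGroup.mk [(x, b)])
      rw [hθ, ← hφτ (x, b)]
      exact hinr _
  have hle := hψ.naturalLE_of_letters hletter u
  rwa [MonoidHom.comp_apply, hu, hψ.map_one, naturalLE_one_iff] at hle

end Unitary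

section Vagner

variable {β : Type*}

theorem wInv_wInv_s13 (u : FreeMonoid (β × Bool)) : wInv (wInv u) = u := by
  simp [wInv, Function.comp_def]

theorem toFreeGroup_wInv (u : FreeMonoid (β × Bool)) :
    toFreeGroup (wInv u) = (toFreeGroup u)⁻¹ :=
  FreeGroup.inv_mk.symm

theorem toFreeGroup_idem (u : FreeMonoid (β × Bool)) : toFreeGroup (idem u) = 1 := by
  rw [idem, map_mul, toFreeGroup_wInv, mul_inv_cancel]

theorem mul_eq_of_isIdempotentElem_of_commute {S : Type*} [Semigroup S] {x y : S}
    (hx : IsIdempotentElem x) (hxy : x * y * x = x) (hyx : y * x * y = y)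
    (hcomm : Commute (x * y) (y * x)) : x * y = x := by
  have hy : y = x * y * (y * x) :=
    calc y = y * (x * x) * y := by rw [hx.eq, hyx]
      _ = y * x * (x * y) := by simp only [mul_assoc]
      _ = x * y * (y * x) := hcomm.eq.symm
  have hyx' : y = x :=
    calc y = x * x * y * (y * (x * x)) := by rw [hx.eq, ← hy]
      _ = x * (x * y * (y * x)) * x := by simp only [mul_assoc]
      _ = x := by rw [← hy, hxy]
  rw [hyx', hx.eq]

variable {c : Con (FreeMonoid (β × Bool))}

theorem mk'_mul_wInv_mul (hc : conGen (vagnerRel β) ≤ c) (u : FreeMonoid (β × Bool)) :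
    c.mk' u * c.mk' (wInv u) * c.mk' u = c.mk' u :=
  (Con.eq c).2 (Con.conGen_le.1 hc _ _ (.inl ⟨u, rfl, rfl⟩))

theorem commute_mk'_idem (hc : conGen (vagnerRel β) ≤ c) (u v : FreeMonoid (β × Bool)) :
    Commute (c.mk' (idem u)) (c.mk' (idem v)) :=
  (Con.eq c).2 (Con.conGen_le.1 hc _ _ (.inr ⟨v, u, rfl, rfl⟩))

theorem isIdempotentElem_mk'_idem (hc : conGen (vagnerRel β) ≤ c) (u : FreeMonoid (β × Bool)) :
    IsIdempotentElem (c.mk' (idem u)) := by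
  rw [IsIdempotentElem, idem, map_mul, ← mul_assoc, mk'_mul_wInv_mul hc]

theorem mk'_idem_eq_of_isIdempotentElem (hc : conGen (vagnerRel β) ≤ c)
    {u : FreeMonoid (β × Bool)} (hu : IsIdempotentElem (c.mk' u)) :
    c.mk' (idem u) = c.mk' u := by
  have hinv := mk'_mul_wInv_mul hc (wInv u)
  have hcomm := commute_mk'_idem hc u (wInv u)
  simp only [idem, map_mul, wInv_wInv_s13] at hinv hcomm ⊢
  exact mul_eq_of_isIdempotentElem_of_commute hu (mk'_mul_wInv_mul hc u) hinv hcomm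

theorem isInverseMonoid_quotient (hc : conGen (vagnerRel β) ≤ c) :
    IsInverseMonoid c.Quotient where
  exists_mul_mul_eq := c.mk'_surjective.forall.2 fun u => ⟨_, mk'_mul_wInv_mul hc u⟩
  commute_of_isIdempotentElem {e f} he hf := by
    obtain ⟨u, rfl⟩ := c.mk'_surjective e
    obtain ⟨v, rfl⟩ := c.mk'_surjective f
    rw [← mk'_idem_eq_of_isIdempotentElem hc he, ← mk'_idem_eq_of_isIdempotentElem hc hf]
    exact commute_mk'_idem hc u v

end Vagner

theorem eq_one_of_prod_mul_eq_one {M : Type*} [Monoid M] {l : List M} {z : M}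
    (hl : ∀ e ∈ l, IsIdempotentElem e) (h : l.prod * z = 1) : (∀ e ∈ l, e = 1) ∧ z = 1 := by
  induction l with
  | nil => simpa using h
  | cons e l ih =>
    rw [List.forall_mem_cons] at hl
    rw [List.prod_cons, mul_assoc] at h
    have he : e = 1 :=
      calc e = e * (e * (l.prod * z)) := by rw [h, mul_one]
        _ = e * (l.prod * z) := by rw [← mul_assoc, hl.1.eq]
        _ = 1 := h
    rw [he, one_mul] at h
    obtain ⟨hl', hz⟩ := ih hl.2 h
    exact ⟨List.forall_mem_cons.2 ⟨he, hl'⟩, hz⟩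

section Presentation

variable {n m k : ℕ}

/-- The factors of the idempotent word `eWord w`. -/
def eFactors (w : Fin k → FreeMonoid (Fin n × Bool)) : List (FreeMonoid (B n × Bool)) :=
  (List.ofFn fun i : Fin n => idem (aW i)) ++
    (List.ofFn fun j : Fin k => idem (tW n * emb (w j) * tWinv n)) ++
    (List.ofFn fun i : Fin n => idem (wInv (aW i)))

theorem exists_eq_idem_of_mem_eFactors {w : Fin k → FreeMonoid (Fin n × Bool)}
    {x : FreeMonoid (B n × Bool)} (hx : x ∈ eFactors w) : ∃ y, x = idem y := by
  simp only [eFactors, List.mem_append, List.mem_ofFn] at hx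
  rcases hx with (⟨i, rfl⟩ | ⟨j, rfl⟩) | ⟨i, rfl⟩ <;> exact ⟨_, rfl⟩

theorem toFreeGroup_eWord (w : Fin k → FreeMonoid (Fin n × Bool)) :
    toFreeGroup (eWord w) = 1 := by
  change toFreeGroup (eFactors w).prod = 1
  rw [map_list_prod]
  refine List.prod_eq_one (List.forall_mem_map.2 fun x hx => ?_)
  obtain ⟨y, rfl⟩ := exists_eq_idem_of_mem_eFactors hx
  exact toFreeGroup_idem y

theorem toFreeGroup_emb (x : FreeMonoid (Fin n × Bool)) :
    toFreeGroup (emb x) = FreeGroup.map Sum.inl (toFreeGroup x) :=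
  rfl

variable (hm : 0 < m) (r : Fin m → FreeMonoid (Fin n × Bool))
  (w : Fin k → FreeMonoid (Fin n × Bool))

theorem conGen_vagnerRel_le_invCon : conGen (vagnerRel (B n)) ≤ invCon hm r w :=
  Con.conGen_mono fun _ _ => .inl

instance : IsInverseMonoid (invCon hm r w).Quotient :=
  isInverseMonoid_quotient (conGen_vagnerRel_le_invCon hm r w)

theorem invCon_eFactors_and_emb_eq_one :
    (∀ x ∈ eFactors w, (invCon hm r w).mk' x = 1) ∧
      (invCon hm r w).mk' (emb (r ⟨0, hm⟩)) = 1 := by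
  have hrel : (invCon hm r w).mk' (eWord w * emb (r ⟨0, hm⟩)) = 1 :=
    (Con.eq _).2 (.of _ _ (.inr (.inl ⟨rfl, rfl⟩)))
  have hidem : ∀ e ∈ (eFactors w).map (invCon hm r w).mk', IsIdempotentElem e := by
    refine List.forall_mem_map.2 fun x hx => ?_
    obtain ⟨y, rfl⟩ := exists_eq_idem_of_mem_eFactors hx
    exact isIdempotentElem_mk'_idem (conGen_vagnerRel_le_invCon hm r w) y
  rw [map_mul, eWord, ← eFactors, map_list_prod] at hrel
  simpa only [List.forall_mem_map] using eq_one_of_prod_mul_eq_one hidem hrel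

theorem mk'_emb_relator_eq_one (i : Fin m) : (invCon hm r w).mk' (emb (r i)) = 1 := by
  obtain rfl | hi := eq_or_ne i ⟨0, hm⟩
  · exact (invCon_eFactors_and_emb_eq_one hm r w).2
  · exact (Con.eq _).2 (.of _ _ (.inr (.inr ⟨i, hi, rfl, rfl⟩)))

/-- The generator `aᵢ` as a unit of `M`. -/
def aUnit (i : Fin n) : (invCon hm r w).Quotientˣ where
  val := (invCon hm r w).mk' (aW i)
  inv := (invCon hm r w).mk' (wInv (aW i))
  val_inv := (invCon_eFactors_and_emb_eq_one hm r w).1 (idem (aW i)) (by simp [eFactors])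
  inv_val := (invCon_eFactors_and_emb_eq_one hm r w).1 (idem (wInv (aW i))) (by simp [eFactors])

theorem coe_lift_aUnit_toFreeGroup (x : FreeMonoid (Fin n × Bool)) :
    (FreeGroup.lift (aUnit hm r w) (toFreeGroup x) : (invCon hm r w).Quotient) =
      (invCon hm r w).mk' (emb x) := by
  have h : (Units.coeHom _).comp ((FreeGroup.lift (aUnit hm r w)).comp toFreeGroup) =
      (invCon hm r w).mk'.comp emb := by
    refine FreeMonoid.hom_eq ?_
    rintro ⟨i, b⟩
    change ((FreeGroup.lift (aUnit hm r w) (FreeGroup.mk [(i, b)]) : (invCon hm r w).Quotientˣ) :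
      (invCon hm r w).Quotient) = (invCon hm r w).mk' (.of (.inl i, b))
    rw [FreeGroup.lift_mk, List.map_singleton, List.prod_singleton]
    cases b <;> rfl
  exact DFunLike.congr_fun h x

/-- The homomorphism from `G` to the units of `M` with `aᵢ ↦ aᵢ`. -/
def unitsHom : PresentedGroup (relsG r) →* (invCon hm r w).Quotientˣ :=
  PresentedGroup.toGroup (f := aUnit hm r w) (by
    rintro _ ⟨i, rfl⟩
    exact Units.ext ((coe_lift_aUnit_toFreeGroup hm r w (r i)).trans
      (mk'_emb_relator_eq_one hm r w i)))

theorem relsK_subset_ker_extendByFree :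
    relsK hm r w ⊆ (extendByFree (τ := Unit) (PresentedGroup.mk (relsG r))).ker := by
  have hr : ∀ i, extendByFree (PresentedGroup.mk (relsG r)) (toFreeGroup (emb (r i))) = 1 := by
    intro i
    have hone : PresentedGroup.mk (relsG r) (toFreeGroup (r i)) = 1 :=
      PresentedGroup.one_of_mem ⟨i, rfl⟩
    rw [toFreeGroup_emb, extendByFree_map_inl, hone, map_one]
  rintro _ (rfl | ⟨i, -, rfl⟩)
  · change extendByFree _ (toFreeGroup (eWord w * emb (r ⟨0, hm⟩))) = 1
    rw [map_mul, toFreeGroup_eWord, one_mul, hr]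
  · exact hr i

end Presentation

/-- The inverse monoid `M = Inv⟨B | e·r₁ = 1, r₂ = 1, …, r_m = 1⟩` is `E`-unitary: every
word mapping to the identity of the maximal group image
`K = Gp⟨B | e·r₁ = 1, r₂ = 1, …, r_m = 1⟩` (i.e. whose free-group image lies in the normal
closure of the relators) is an idempotent of `M`. -/
theorem invCon_eUnitary {n m k : ℕ} (hn : 0 < n) (hm : 0 < m) (hk : 0 < k)
    (r : Fin m → FreeMonoid (Fin n × Bool)) (w : Fin k → FreeMonoid (Fin n × Bool)) :
    ∀ u : FreeMonoid (B n × Bool),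
      FreeGroup.mk (FreeMonoid.toList u) ∈ Subgroup.normalClosure (relsK hm r w) →
        invCon hm r w (u * u) u := by
  intro u hu
  have hker : extendByFree (PresentedGroup.mk (relsG r)) (toFreeGroup u) = 1 :=
    Subgroup.normalClosure_le_normal (relsK_subset_ker_extendByFree hm r w) hu
  refine (Con.eq _).1 (isIdempotentElem_of_extendByFree_eq_one (π := (invCon hm r w).mk')
    (unitsHom hm r w) (fun i b => ?_) (fun t b => ?_) hker)
  · exact (coe_lift_aUnit_toFreeGroup hm r w (.of (i, b))).symm
  · exact isIdempotentElem_mk'_idem (conGen_vagnerRel_le_invCon hm r w) (.of (.inr t, b))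
end

section
/- With the construction setup fixed (alphabet B = Fin n ⊕ Unit, idempotent word e, inverse monoid M = Inv⟨B | e·r₁ = 1, r₂ = 1, …, r_m = 1⟩ with defining congruence σ, group G = Gp⟨Fin n | r₁ = 1, …, r_m = 1⟩, and T the submonoid of G generated by the images of w₁, …, w_k): for every word u ∈ FreeMonoid ((Fin n) × Bool), the image πG(u) lies in T if and only if the word t * u * t⁻¹ (regarded as a word over B) is right invertible modulo σ, i.e., there is a word v ∈ FreeMonoid (B × Bool) with σ relating (t * u * t⁻¹) * v to the empty word. -/
/-! In an inverse monoid an idempotent `a` with `a * b = 1` is trivial, so `e * r₁ = 1` splits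
into `r₁ = 1` and the triviality of every factor of `e`. Hence the `aᵢ` are units, which gives
`Φ : G →* Mˣ`, and `t wⱼ t⁻¹` is right invertible, which forces `t t⁻¹ = 1` and
`t g t⁻¹ t = t g` for `g = Φ (πG wⱼ)`. The last equation is stable under products, so it holds
for all `g ∈ Φ(T)`, and then `t g⁻¹ t⁻¹` is a right inverse of `t g t⁻¹`.

Conversely, let `G` act on `G × ℕ` by right multiplication and let `t` act as a bijection of
`G × ℕ` onto `T × ℕ`. All relations of `M` hold for this action by partial bijections. A right
invertible element acts by a total map, and `t u t⁻¹` is total only if `T * πG u ⊆ T`. -/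

section Words

variable {α : Type*} {n m : ℕ}

theorem wInv_mul_s14 (x y : FreeMonoid (α × Bool)) : wInv (x * y) = wInv y * wInv x := by
  simp [wInv, FreeMonoid.toList_mul, FreeMonoid.ofList_append]

theorem wInv_of (p : α × Bool) : wInv (FreeMonoid.of p) = FreeMonoid.of (p.1, !p.2) := by
  simp [wInv]

theorem emb_wInv (x : FreeMonoid (Fin n × Bool)) : emb (wInv x) = wInv (emb x) := by
  induction x using FreeMonoid.inductionOn' with
  | one => rfl
  | of_mul p x ih =>
    have hletter : emb (wInv (.of p)) = wInv (emb (.of p)) := rfl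
    rw [wInv_mul_s14, map_mul, map_mul, wInv_mul_s14, ih, hletter]

theorem emb_idem (x : FreeMonoid (Fin n × Bool)) : emb (idem x) = idem (emb x) := by
  rw [idem, idem, map_mul, emb_wInv]

theorem wInv_tW (n : ℕ) : wInv (tW n) = tWinv n :=
  wInv_of _

theorem wInv_tWinv (n : ℕ) : wInv (tWinv n) = tW n :=
  wInv_of _

theorem idem_conj (x : FreeMonoid (Fin n × Bool)) :
    idem (tW n * emb x * tWinv n) =
      tW n * emb x * tWinv n * (tW n * emb (wInv x) * tWinv n) := by
  rw [idem, wInv_mul_s14, wInv_mul_s14, wInv_tW, wInv_tWinv, emb_wInv, mul_assoc (tW n) (wInv _)]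

/-- The homomorphism sending a word to the element of the free group that it spells. -/
def wordToFreeGroup (α : Type*) : FreeMonoid (α × Bool) →* FreeGroup α where
  toFun x := FreeGroup.mk x.toList
  map_one' := rfl
  map_mul' _ _ := rfl

theorem wordToFreeGroup_of (p : α × Bool) :
    wordToFreeGroup α (FreeMonoid.of p) =
      bif p.2 then FreeGroup.of p.1 else (FreeGroup.of p.1)⁻¹ := by
  obtain ⟨a, _ | _⟩ := p <;> rfl

/-- `piG r` bundled as a monoid homomorphism. -/
def piGHom (r : Fin m → FreeMonoid (Fin n × Bool)) :
    FreeMonoid (Fin n × Bool) →* PresentedGroup (relsG r) :=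
  (PresentedGroup.mk (relsG r)).comp (wordToFreeGroup (Fin n))

theorem piGHom_apply (r : Fin m → FreeMonoid (Fin n × Bool))
    (x : FreeMonoid (Fin n × Bool)) : piGHom r x = piG r x :=
  rfl

theorem piG_wInv (r : Fin m → FreeMonoid (Fin n × Bool))
    (x : FreeMonoid (Fin n × Bool)) : piG r (wInv x) = (piG r x)⁻¹ :=
  rfl

theorem piG_relator (r : Fin m → FreeMonoid (Fin n × Bool)) (i : Fin m) :
    piG r (r i) = 1 :=
  PresentedGroup.one_of_mem ⟨i, rfl⟩

theorem piG_idem (r : Fin m → FreeMonoid (Fin n × Bool))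
    (x : FreeMonoid (Fin n × Bool)) : piG r (idem x) = 1 := by
  rw [← piGHom_apply, idem, map_mul, piGHom_apply, piGHom_apply, piG_wInv, mul_inv_cancel]

end Words

section Idempotents

variable {M : Type*} [Monoid M]

theorem eq_one_of_isIdempotentElem_of_mul_eq_one {a b : M} (ha : IsIdempotentElem a)
    (hab : a * b = 1) : a = 1 :=
  calc a = a * (a * b) := by rw [hab, mul_one]
    _ = 1 := by rw [← mul_assoc, ha.eq, hab]

theorem mul_innerInverse_eq_one {t t' y : M} (ht : t * t' * t = t) (hy : t * y = 1) :
    t * t' = 1 :=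
  calc t * t' = t * t' * (t * y) := by rw [hy, mul_one]
    _ = 1 := by rw [← mul_assoc, ht, hy]

theorem list_prod_mul_eq_one_iff {l : List M} (hl : ∀ a ∈ l, IsIdempotentElem a) {b : M} :
    l.prod * b = 1 ↔ (∀ a ∈ l, a = 1) ∧ b = 1 := by
  refine ⟨fun h ↦ ?_, fun ⟨h, hb⟩ ↦ by rw [List.prod_eq_one h, hb, mul_one]⟩
  induction l with
  | nil => simpa using h
  | cons a l ih =>
    rw [List.forall_mem_cons] at hl
    rw [List.prod_cons, mul_assoc] at h
    have ha : a = 1 := eq_one_of_isIdempotentElem_of_mul_eq_one hl.1 h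
    rw [ha, one_mul] at h
    exact ⟨List.forall_mem_cons.2 ⟨ha, (ih hl.2 h).1⟩, (ih hl.2 h).2⟩

/-- The submonoid of all `g` with `t g t' t = t g`, where `t'` is an inner inverse of `t`. For
maps acting on the right these are the `g` that send the range of `t` into itself. -/
def rangeStabilizer (t t' : M) (ht : t * t' * t = t) : Submonoid M where
  carrier := {g | t * g * (t' * t) = t * g}
  one_mem' := by simp only [Set.mem_ofPred_eq, mul_one, ← mul_assoc, ht]
  mul_mem' {a b} ha hb := by
    calc t * (a * b) * (t' * t) = t * a * (t' * t) * b * (t' * t) := by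
          rw [ha, ← mul_assoc t a b]
      _ = t * a * t' * (t * b * (t' * t)) := by simp only [mul_assoc]
      _ = t * a * (t' * t) * b := by rw [hb]; simp only [mul_assoc]
      _ = t * (a * b) := by rw [ha, mul_assoc]

theorem mem_rangeStabilizer {t t' : M} {ht : t * t' * t = t} {g : M} :
    g ∈ rangeStabilizer t t' ht ↔ t * g * (t' * t) = t * g :=
  Iff.rfl

theorem mem_rangeStabilizer_of_conj_mul_conj_inv {t t' : M} (ht : t * t' * t = t) (g : Mˣ)
    (hcomm : Commute (t' * t) (g * t' * (t * ↑g⁻¹)))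
    (hg : t * g * t' * (t * ↑g⁻¹ * t') = 1) : (g : M) ∈ rangeStabilizer t t' ht := by
  have key : t * (g * t' * (t * ↑g⁻¹)) = t :=
    calc t * (g * t' * (t * ↑g⁻¹)) = t * ((t' * t) * (g * t' * (t * ↑g⁻¹))) := by
          rw [← mul_assoc t (t' * t), ← mul_assoc t t' t, ht]
      _ = t * g * t' * (t * ↑g⁻¹ * t') * t := by rw [hcomm.eq]; simp only [mul_assoc]
      _ = t := by rw [hg, one_mul]
  calc t * g * (t' * t) = t * (g * t' * (t * ↑g⁻¹)) * g := by simp [mul_assoc]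
    _ = t * g := by rw [key]

theorem conj_mul_conj_inv_eq_one {t t' : M} (ht : t * t' * t = t) (htt' : t * t' = 1) {g : Mˣ}
    (hg : (g : M) ∈ rangeStabilizer t t' ht) : t * g * t' * (t * ↑g⁻¹ * t') = 1 :=
  calc t * g * t' * (t * ↑g⁻¹ * t') = t * g * (t' * t) * (↑g⁻¹ * t') := by simp only [mul_assoc]
    _ = t * t' := by rw [mem_rangeStabilizer.1 hg]; simp [mul_assoc]
    _ = 1 := htt'

end Idempotents

section VagnerHom

variable {α M : Type*} [Monoid M]

/-- A homomorphism on words that identifies Vagner-related words, that is, one that factors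
through the free inverse monoid. -/
def IsVagnerHom (f : FreeMonoid (α × Bool) →* M) : Prop :=
  ∀ x y, vagnerRel α x y → f x = f y

namespace IsVagnerHom

variable {f : FreeMonoid (α × Bool) →* M}

theorem map_mul_wInv_mul (hf : IsVagnerHom f) (x : FreeMonoid (α × Bool)) :
    f x * f (wInv x) * f x = f x := by
  simpa only [map_mul] using hf _ _ (.inl ⟨x, rfl, rfl⟩)

theorem commute_map_idem (hf : IsVagnerHom f) (x y : FreeMonoid (α × Bool)) :
    Commute (f (idem x)) (f (idem y)) := by
  simpa only [Commute, SemiconjBy, idem, map_mul] using hf _ _ (.inr ⟨y, x, rfl, rfl⟩)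

theorem isIdempotentElem_map_idem (hf : IsVagnerHom f) (x : FreeMonoid (α × Bool)) :
    IsIdempotentElem (f (idem x)) := by
  rw [IsIdempotentElem, idem, map_mul, ← mul_assoc, hf.map_mul_wInv_mul]

theorem map_eWord_mul_eq_one_iff {n k : ℕ} {f : FreeMonoid (B n × Bool) →* M}
    (hf : IsVagnerHom f) (w : Fin k → FreeMonoid (Fin n × Bool)) (x : FreeMonoid (B n × Bool)) :
    f (eWord w * x) = 1 ↔
      ((∀ p, f (idem (emb (FreeMonoid.of p))) = 1) ∧
        ∀ j, f (idem (tW n * emb (w j) * tWinv n)) = 1) ∧ f x = 1 := by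
  have hidem : ∀ a ∈ List.map f
      ((List.ofFn fun i : Fin n ↦ idem (aW i)) ++
        (List.ofFn fun j ↦ idem (tW n * emb (w j) * tWinv n)) ++
        (List.ofFn fun i : Fin n ↦ idem (wInv (aW i)))), IsIdempotentElem a := by
    simp only [List.mem_map, List.mem_append, List.mem_ofFn]
    rintro _ ⟨_, (⟨i, rfl⟩ | ⟨j, rfl⟩) | ⟨i, rfl⟩, rfl⟩ <;> exact hf.isIdempotentElem_map_idem _
  have emb_pos (i : Fin n) : emb (FreeMonoid.of (i, true)) = aW i := rfl
  have emb_neg (i : Fin n) : emb (FreeMonoid.of (i, false)) = wInv (aW i) := rfl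
  rw [map_mul, eWord, map_list_prod, list_prod_mul_eq_one_iff hidem]
  simp only [List.forall_mem_map, List.forall_mem_append, List.forall_mem_ofFn_iff,
    Prod.forall, Bool.forall_bool, forall_and, emb_pos, emb_neg]
  tauto

end IsVagnerHom

variable {n m k : ℕ} {r : Fin m → FreeMonoid (Fin n × Bool)}
  {w : Fin k → FreeMonoid (Fin n × Bool)} {f : FreeMonoid (B n × Bool) →* M}

theorem invCon_le_ker_iff {hm : 0 < m} :
    invCon hm r w ≤ Con.ker f ↔
      IsVagnerHom f ∧
      ((∀ p, f (idem (emb (FreeMonoid.of p))) = 1) ∧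
        ∀ j, f (idem (tW n * emb (w j) * tWinv n)) = 1) ∧
      ∀ i, f (emb (r i)) = 1 := by
  rw [invCon, Con.conGen_le]
  constructor
  · intro h
    have hf : IsVagnerHom f := fun x y hxy ↦ h x y (.inl hxy)
    have h₀ : f (eWord w * emb (r ⟨0, hm⟩)) = 1 := by
      simpa using h _ _ (.inr (.inl ⟨rfl, rfl⟩))
    obtain ⟨he, hr₀⟩ := (hf.map_eWord_mul_eq_one_iff w _).1 h₀
    refine ⟨hf, he, fun i ↦ ?_⟩
    by_cases hi : i = ⟨0, hm⟩
    · rw [hi, hr₀]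
    · simpa using h _ _ (.inr (.inr ⟨i, hi, rfl, rfl⟩))
  · rintro ⟨hf, he, hr⟩ x y (hxy | ⟨rfl, rfl⟩ | ⟨i, -, rfl, rfl⟩)
    · exact hf x y hxy
    · rw [Con.ker_rel, map_one, hf.map_eWord_mul_eq_one_iff]
      exact ⟨he, hr _⟩
    · rw [Con.ker_rel, map_one, hr]

theorem exists_unitsHom_apply_piG (g : FreeMonoid (Fin n × Bool) →* M)
    (hidem : ∀ p, g (idem (FreeMonoid.of p)) = 1) (hr : ∀ i, g (r i) = 1) :
    ∃ Φ : PresentedGroup (relsG r) →* Mˣ, ∀ x, (Φ (piG r x) : M) = g x := by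
  have hletter (p : Fin n × Bool) : g (.of p) * g (.of (p.1, !p.2)) = 1 := by
    rw [← map_mul, ← wInv_of]
    exact hidem p
  let a (i : Fin n) : Mˣ :=
    ⟨g (.of (i, true)), g (.of (i, false)), hletter (i, true), hletter (i, false)⟩
  have hlift : (Units.coeHom M).comp ((FreeGroup.lift a).comp (wordToFreeGroup (Fin n))) = g := by
    ext ⟨i, _ | _⟩ <;> simp [wordToFreeGroup_of, a]
  have hrels : ∀ x ∈ relsG r, FreeGroup.lift a x = 1 := by
    rintro _ ⟨i, rfl⟩
    exact Units.ext ((DFunLike.congr_fun hlift (r i)).trans (hr i))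
  exact ⟨PresentedGroup.toGroup hrels, DFunLike.congr_fun hlift⟩

theorem map_idem_conj_eq_one_of_mem_subT {hm : 0 < m} (hk : 0 < k)
    (hf : invCon hm r w ≤ Con.ker f) {u : FreeMonoid (Fin n × Bool)} (hu : piG r u ∈ subT r w) :
    f (idem (tW n * emb u * tWinv n)) = 1 := by
  obtain ⟨hV, ⟨ha, hw⟩, hr⟩ := invCon_le_ker_iff.1 hf
  obtain ⟨Φ, hΦ⟩ : ∃ Φ : PresentedGroup (relsG r) →* Mˣ, ∀ x, (Φ (piG r x) : M) = f (emb x) :=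
    exists_unitsHom_apply_piG (f.comp emb) (fun p ↦ by simpa [emb_idem] using ha p) hr
  have hconj (x : FreeMonoid (Fin n × Bool)) : f (idem (tW n * emb x * tWinv n)) =
      f (tW n) * Φ (piG r x) * f (tWinv n) *
        (f (tW n) * ↑(Φ (piG r x))⁻¹ * f (tWinv n)) := by
    simp only [← map_inv, ← piG_wInv, hΦ, idem_conj, map_mul]
  have ht : f (tW n) * f (tWinv n) * f (tW n) = f (tW n) := by
    simpa only [wInv_tW] using hV.map_mul_wInv_mul (tW n)
  have htt' : f (tW n) * f (tWinv n) = 1 := by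
    have h := (hconj (w ⟨0, hk⟩)).symm.trans (hw ⟨0, hk⟩)
    simp only [mul_assoc] at h
    exact mul_innerInverse_eq_one ht h
  have hT : subT r w ≤ (rangeStabilizer _ _ ht).comap ((Units.coeHom M).comp Φ) := by
    rw [subT, Submonoid.closure_le]
    rintro _ ⟨j, rfl⟩
    refine mem_rangeStabilizer_of_conj_mul_conj_inv ht (Φ (piG r (w j))) ?_ ?_
    · simpa only [idem, wInv_mul_s14, wInv_tWinv, ← emb_wInv, map_mul, ← hΦ, piG_wInv, map_inv]
        using hV.commute_map_idem (tWinv n) (emb (w j) * tWinv n)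
    · rw [← hconj, hw]
  rw [hconj u]
  exact conj_mul_conj_inv_eq_one ht htt' (g := Φ (piG r u)) (hT hu)

end VagnerHom

section PartialBijections

/-- The symmetric inverse monoid on `X`. Partial bijections act on the right: `f * g` applies
`f` first. -/
abbrev symmetricInverseMonoid (X : Type*) : Monoid (X ≃. X) where
  mul := PEquiv.trans
  one := PEquiv.refl X
  mul_assoc := PEquiv.trans_assoc
  one_mul := PEquiv.refl_trans
  mul_one := PEquiv.trans_refl

attribute [local instance] symmetricInverseMonoid

variable {X : Type*}

theorem pequiv_mul_apply (f g : X ≃. X) (x : X) : (f * g) x = (f x).bind g :=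
  rfl

theorem pequiv_symm_mul (f g : X ≃. X) : (f * g).symm = g.symm * f.symm :=
  PEquiv.symm_trans_rev f g

theorem pequiv_mul_symm_eq_one_iff {f : X ≃. X} : f * f.symm = 1 ↔ ∀ x, (f x).isSome :=
  PEquiv.trans_symm_eq_iff_forall_isSome

theorem pequiv_mul_symm_apply (f : X ≃. X) (x : X) : (f * f.symm) x = (f x).map fun _ ↦ x := by
  rw [pequiv_mul_apply]
  rcases h : f x with _ | y
  · rfl
  · exact f.eq_some_iff.2 h

theorem pequiv_mul_symm_mul (f : X ≃. X) : f * f.symm * f = f := by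
  ext1 x
  rw [pequiv_mul_apply, pequiv_mul_symm_apply]
  cases h : f x <;> simp [h]

theorem pequiv_commute_mul_symm (f g : X ≃. X) : Commute (f * f.symm) (g * g.symm) := by
  ext1 x
  simp only [pequiv_mul_apply _ (_ * _), pequiv_mul_symm_apply]
  cases hf : f x <;> cases hg : g x <;> simp [hf, hg]

theorem isSome_of_pequiv_mul_eq_one {f g : X ≃. X} (h : f * g = 1) (x : X) : (f x).isSome := by
  have hx : (f x).bind g = some x := DFunLike.congr_fun h x
  exact Option.isSome_of_isSome_bind (f := g) (by rw [hx]; rfl)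

theorem exists_pequiv_total_range_eq [Countable X] {S : Set X} (hS : S.Infinite) :
    ∃ t : X ≃. X, (∀ x, (t x).isSome) ∧ ∀ y, (t.symm y).isSome ↔ y ∈ S := by
  classical
  have : Infinite S := hS.to_subtype
  have : Infinite X := .of_injective (Subtype.val : S → X) Subtype.val_injective
  obtain ⟨_⟩ := nonempty_denumerable X
  obtain ⟨_⟩ := nonempty_denumerable S
  let e : X ≃ S := Denumerable.equiv₂ X S
  let t : X ≃. X :=
    { toFun x := some (e x)
      invFun y := if hy : y ∈ S then some (e.symm ⟨y, hy⟩) else none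
      inv x y := by
        split_ifs with hy
        · simp only [Option.some_inj, Equiv.symm_apply_eq, Subtype.ext_iff]
          exact eq_comm
        · simpa using fun h : (e x : X) = y ↦ hy (h ▸ (e x).2) }
  refine ⟨t, fun _ ↦ rfl, fun y ↦ ?_⟩
  change (if hy : y ∈ S then some (e.symm ⟨y, hy⟩) else none).isSome ↔ _
  split_ifs with hy <;> simp [hy]

section WordAction

variable {α : Type*}

/-- The action of words by partial bijections in which the letter `b⁻¹` acts as the inverse of
the partial bijection `act b`. -/
def wordAction (act : α → (X ≃. X)) : FreeMonoid (α × Bool) →* (X ≃. X) :=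
  FreeMonoid.lift fun p ↦ bif p.2 then act p.1 else (act p.1).symm

theorem wordAction_wInv (act : α → (X ≃. X)) (x : FreeMonoid (α × Bool)) :
    wordAction act (wInv x) = (wordAction act x).symm := by
  induction x using FreeMonoid.inductionOn' with
  | one => rfl
  | of_mul p x ih =>
    have hletter : wordAction act (.of (p.1, !p.2)) = (wordAction act (.of p)).symm := by
      obtain ⟨b, _ | _⟩ := p <;> rfl
    rw [wInv_mul_s14, map_mul, map_mul, ih, wInv_of, hletter, pequiv_symm_mul]

theorem isVagnerHom_wordAction (act : α → (X ≃. X)) : IsVagnerHom (wordAction act) := by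
  rintro _ _ (⟨x, rfl, rfl⟩ | ⟨x, y, rfl, rfl⟩)
  · simp only [map_mul, wordAction_wInv, pequiv_mul_symm_mul]
  · simp only [map_mul, wordAction_wInv]
    exact pequiv_commute_mul_symm _ _

theorem wordAction_idem_eq_one_iff {act : α → (X ≃. X)} {x : FreeMonoid (α × Bool)} :
    wordAction act (idem x) = 1 ↔ ∀ a, (wordAction act x a).isSome := by
  rw [idem, map_mul, wordAction_wInv, pequiv_mul_symm_eq_one_iff]

end WordAction

section RightMultiplication

variable {G : Type*} [Group G] {Y : Type*}

/-- The right regular action of `G` on the first factor of `G × Y`, by partial bijections. -/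
def rightMulAction (G : Type*) [Group G] (Y : Type*) : G →* (G × Y ≃. G × Y) where
  toFun g := ((Equiv.mulRight g).prodCongr (Equiv.refl Y)).toPEquiv
  map_one' := by ext1 x; exact congrArg some (Prod.ext (mul_one _) rfl)
  map_mul' g h := by ext1 x; exact congrArg some (Prod.ext (mul_assoc _ _ _).symm rfl)

theorem rightMulAction_apply (g : G) (x : G × Y) :
    rightMulAction G Y g x = some (x.1 * g, x.2) :=
  rfl

theorem isSome_conj_rightMulAction_iff [Nonempty Y] {T : Submonoid G} {t : G × Y ≃. G × Y}
    (htotal : ∀ x, (t x).isSome) (hrange : ∀ y, (t.symm y).isSome ↔ y.1 ∈ T) {g : G} :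
    (∀ x, ((t * rightMulAction G Y g * t.symm) x).isSome) ↔ g ∈ T := by
  have hconj {x y : G × Y} (hxy : t x = some y) :
      ((t * rightMulAction G Y g * t.symm) x).isSome ↔ y.1 * g ∈ T := by
    simp [pequiv_mul_apply, hxy, rightMulAction_apply, hrange]
  constructor
  · intro h
    obtain ⟨y⟩ := ‹Nonempty Y›
    obtain ⟨x, hx⟩ := Option.isSome_iff_exists.1 ((hrange (1, y)).2 T.one_mem)
    simpa using (hconj (t.eq_some_iff.1 hx)).1 (h x)
  · intro hg x
    obtain ⟨y, hy⟩ := Option.isSome_iff_exists.1 (htotal x)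
    have hyT : y.1 ∈ T := (hrange y).1 (by rw [t.eq_some_iff.2 hy]; rfl)
    exact (hconj hy).2 (T.mul_mem hyT hg)

end RightMultiplication

section GroupAction

variable {n m : ℕ} {r : Fin m → FreeMonoid (Fin n × Bool)} {Y : Type*}

/-- The action of words over `B n` on `G × Y` in which `aᵢ` acts by right multiplication and `t`
by a given partial bijection. -/
def extendedAction (r : Fin m → FreeMonoid (Fin n × Bool))
    (t : PresentedGroup (relsG r) × Y ≃. PresentedGroup (relsG r) × Y) :
    FreeMonoid (B n × Bool) →*
      (PresentedGroup (relsG r) × Y ≃. PresentedGroup (relsG r) × Y) :=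
  wordAction (Sum.elim (fun i ↦ rightMulAction _ Y (PresentedGroup.of i)) fun _ ↦ t)

variable {t : PresentedGroup (relsG r) × Y ≃. PresentedGroup (relsG r) × Y}

theorem extendedAction_emb (x : FreeMonoid (Fin n × Bool)) :
    extendedAction r t (emb x) = rightMulAction _ Y (piG r x) := by
  suffices h : (extendedAction r t).comp emb = (rightMulAction _ Y).comp (piGHom r) from
    DFunLike.congr_fun h x
  ext1 ⟨i, _ | _⟩ <;> rfl

theorem extendedAction_conj (x : FreeMonoid (Fin n × Bool)) :
    extendedAction r t (tW n * emb x * tWinv n) = t * rightMulAction _ Y (piG r x) * t.symm := by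
  rw [map_mul, map_mul, extendedAction_emb]
  rfl

theorem invCon_le_ker_extendedAction [Nonempty Y] {k : ℕ} (hm : 0 < m)
    {w : Fin k → FreeMonoid (Fin n × Bool)} (htotal : ∀ x, (t x).isSome)
    (hrange : ∀ y, (t.symm y).isSome ↔ y.1 ∈ subT r w) :
    invCon hm r w ≤ Con.ker (extendedAction r t) := by
  refine invCon_le_ker_iff.2 ⟨isVagnerHom_wordAction _, ⟨fun p ↦ ?_, fun j ↦ ?_⟩, fun i ↦ ?_⟩
  · rw [← emb_idem, extendedAction_emb, piG_idem, map_one]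
  · have hconj : ∀ x, (extendedAction r t (tW n * emb (w j) * tWinv n) x).isSome := by
      rw [extendedAction_conj, isSome_conj_rightMulAction_iff htotal hrange]
      exact Submonoid.subset_closure ⟨j, rfl⟩
    exact wordAction_idem_eq_one_iff.2 hconj
  · rw [extendedAction_emb, piG_relator, map_one]

theorem mem_subT_of_invCon_conj_mul_one {k : ℕ} {hm : 0 < m} {w : Fin k → FreeMonoid (Fin n × Bool)}
    {u : FreeMonoid (Fin n × Bool)} {v : FreeMonoid (B n × Bool)}
    (huv : invCon hm r w (tW n * emb u * tWinv n * v) 1) : piG r u ∈ subT r w := by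
  have : Countable (PresentedGroup (relsG r)) := (PresentedGroup.mk_surjective _).countable
  have hinf : (Prod.fst ⁻¹' (subT r w : Set (PresentedGroup (relsG r))) :
      Set (PresentedGroup (relsG r) × ℕ)).Infinite :=
    Set.infinite_of_injective_forall_mem (Prod.mk_right_injective 1) fun _ ↦ (subT r w).one_mem
  obtain ⟨t, htotal, hrange⟩ := exists_pequiv_total_range_eq hinf
  have hact := invCon_le_ker_extendedAction hm htotal hrange huv
  rw [Con.ker_rel, map_mul, map_one, extendedAction_conj] at hact
  exact (isSome_conj_rightMulAction_iff htotal hrange).1 (isSome_of_pequiv_mul_eq_one hact)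

end GroupAction

end PartialBijections

/-- Key claim: for every word `u` over `Fin n`, the image `πG(u)` lies in
`T = ⟨πG w₁, …, πG w_k⟩ ≤ G` if and only if the word `t u t⁻¹` is right invertible in the
inverse monoid `M = Inv⟨B | e·r₁ = 1, r₂ = 1, …, r_m = 1⟩`, i.e. right invertible modulo
its defining congruence `σ`. -/
theorem mem_T_iff_rightInvertible {n m k : ℕ} (hn : 0 < n) (hm : 0 < m) (hk : 0 < k)
    (r : Fin m → FreeMonoid (Fin n × Bool)) (w : Fin k → FreeMonoid (Fin n × Bool)) :
    ∀ u : FreeMonoid (Fin n × Bool),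
      piG r u ∈ subT r w ↔
        ∃ v : FreeMonoid (B n × Bool), invCon hm r w (tW n * emb u * tWinv n * v) 1 := by
  intro u
  constructor
  · intro hu
    refine ⟨wInv (tW n * emb u * tWinv n), (Con.eq _).1 ?_⟩
    exact map_idem_conj_eq_one_of_mem_subT hk (Con.mk'_ker (invCon hm r w)).ge hu
  · rintro ⟨v, huv⟩
    exact mem_subT_of_invCon_conj_mul_one huv
end
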